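/- arXiv:1207.4850 — 11 statements merged into one kernel-verified Lean document; each statement's English description precedes it below -/
import Mathlib

section
/- Let α, β, γ be complex numbers and let W : ℝ → M be three times differentiable with W(t) invertible for every real t, satisfying the linear third-order matrix ODE W'''(t) = α·W(t) + β·W'(t) + γ·W''(t) for all t. Define U(t) = W(t)⁻¹·W'(t) and V(t) = W(t)⁻¹·W''(t). Then U and V are differentiable and satisfy the matrix system (EqUV): U'(t) = −U(t)² + V(t) and V'(t) = −U(t)·V(t) + α·I + β·U(t) + γ·V(t) for all t. -/
attribute [local instance] Matrix.normedAddCommGroup Matrix.normedSpace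

/-!
Since `(W⁻¹)' = -W⁻¹ W' W⁻¹`, every left quotient `W⁻¹ X` has derivative
`-(W⁻¹ W') (W⁻¹ X) + W⁻¹ X'`. Take `X = W'` for the equation of `U`, and `X = W''` for that of `V`;
in the latter, left multiplication by `W⁻¹` turns the linear equation for `W'''` into
`W⁻¹ W''' = α + β U + γ V`.
-/

section NormedAlgebra

open scoped Ring

variable {𝕜 R : Type*} [NontriviallyNormedField 𝕜] [NormedRing R] [NormedAlgebra 𝕜 R]
  [HasSummableGeomSeries R] {W X : 𝕜 → R} {dW dX : R} {t : 𝕜}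

theorem hasDerivAt_ringInverse (hW : HasDerivAt W dW t) (ht : IsUnit (W t)) :
    HasDerivAt (fun s ↦ (W s)⁻¹ʳ) (-((W t)⁻¹ʳ * dW * (W t)⁻¹ʳ)) t := by
  obtain ⟨w, hw⟩ := ht
  refine ((hasFDerivAt_ringInverse w).comp_hasDerivAt_of_eq t hW hw).congr_deriv ?_
  simp [← hw]

theorem hasDerivAt_ringInverse_mul (hW : HasDerivAt W dW t) (hX : HasDerivAt X dX t)
    (ht : IsUnit (W t)) :
    HasDerivAt (fun s ↦ (W s)⁻¹ʳ * X s)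
      (-((W t)⁻¹ʳ * dW * ((W t)⁻¹ʳ * X t)) + (W t)⁻¹ʳ * dX) t := by
  refine ((hasDerivAt_ringInverse hW ht).fun_mul hX).congr_deriv ?_
  rw [neg_mul, mul_assoc _ _ (X t)]

/-- The choice `S = Rᵐᵒᵖ` allows coefficients in `R` that multiply `W`, `W'`, `W''` from the
right. -/
theorem goldfish_stmt0_general {S : Type*} [SMul S R] [SMulCommClass S R R] {α β γ : S}
    {W W' W'' U V : 𝕜 → R} {t : 𝕜}
    (hW : HasDerivAt W (W' t) t)
    (hW' : HasDerivAt W' (W'' t) t)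
    (hW'' : HasDerivAt W'' (α • W t + β • W' t + γ • W'' t) t)
    (ht : IsUnit (W t))
    (hU : ∀ s, U s = (W s)⁻¹ʳ * W' s)
    (hV : ∀ s, V s = (W s)⁻¹ʳ * W'' s) :
    HasDerivAt U (-(U t * U t) + V t) t ∧
      HasDerivAt V (-(U t * V t) + α • (1 : R) + β • U t + γ • V t) t := by
  obtain rfl : U = fun s ↦ (W s)⁻¹ʳ * W' s := funext hU
  obtain rfl : V = fun s ↦ (W s)⁻¹ʳ * W'' s := funext hV
  have linear_eq : (W t)⁻¹ʳ * (α • W t + β • W' t + γ • W'' t) =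
      α • (1 : R) + β • ((W t)⁻¹ʳ * W' t) + γ • ((W t)⁻¹ʳ * W'' t) := by
    simp only [mul_add, mul_smul_comm, Ring.inverse_mul_cancel _ ht]
  refine ⟨hasDerivAt_ringInverse_mul hW hW' ht,
    (hasDerivAt_ringInverse_mul hW hW'' ht).congr_deriv ?_⟩
  rw [linear_eq, ← add_assoc, ← add_assoc]

end NormedAlgebra

/-- If `W : ℝ → M` is three times differentiable, invertible for every `t`,
and satisfies `W''' = α•W + β•W' + γ•W''`, then `U = W⁻¹·W'` and `V = W⁻¹·W''` are
differentiable and satisfy the matrix system (EqUV):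
`U' = −U² + V` and `V' = −U·V + α·I + β·U + γ·V`. -/
theorem goldfish_stmt0 (N : ℕ) (hN : 0 < N) (α β γ : ℂ)
    (W Wd Wdd Wddd U V : ℝ → Matrix (Fin N) (Fin N) ℂ)
    (hW : ∀ t : ℝ, HasDerivAt W (Wd t) t)
    (hWd : ∀ t : ℝ, HasDerivAt Wd (Wdd t) t)
    (hWdd : ∀ t : ℝ, HasDerivAt Wdd (Wddd t) t)
    (hWinv : ∀ t : ℝ, IsUnit (W t))
    (hODE : ∀ t : ℝ, Wddd t = α • W t + β • Wd t + γ • Wdd t)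
    (hU : ∀ t : ℝ, U t = (W t)⁻¹ * Wd t)
    (hV : ∀ t : ℝ, V t = (W t)⁻¹ * Wdd t) :
    ∀ t : ℝ,
      HasDerivAt U (-(U t * U t) + V t) t ∧
      HasDerivAt V (-(U t * V t) + α • (1 : Matrix (Fin N) (Fin N) ℂ) + β • U t + γ • V t) t := by
  simp only [Matrix.nonsing_inv_eq_ringInverse] at hU hV
  -- The entrywise sup norm is not submultiplicative; the `ℓ^∞` operator norm is, and `HasDerivAt`
  -- depends on the norm only through the topology, which is the same for both.
  let : NormedRing (Matrix (Fin N) (Fin N) ℂ) := Matrix.linftyOpNormedRing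
  let : NormedAlgebra ℝ (Matrix (Fin N) (Fin N) ℂ) := Matrix.linftyOpNormedAlgebra
  have : HasSummableGeomSeries (Matrix (Fin N) (Fin N) ℂ) :=
    @instHasSummableGeomSeriesOfCompleteSpace _ _ (FiniteDimensional.complete ℝ _)
  exact fun t ↦ goldfish_stmt0_general (hW t) (hWd t) (hODE t ▸ hWdd t) (hWinv t) hU hV
end

section
/- Let α, β, γ be complex numbers and let U, V : ℝ → M be differentiable functions satisfying the matrix system (EqUV). Let W : ℝ → M be differentiable and satisfy W'(t) = W(t)·U(t) for all t. Then W is three times differentiable, W''(t) = W(t)·V(t), and W satisfies the linear third-order matrix ODE W'''(t) = α·W(t) + β·W'(t) + γ·W''(t) for all t. -/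
attribute [local instance] Matrix.normedAddCommGroup Matrix.normedSpace

/-!
Put `D = d/dt + U`, where `U` acts by left multiplication. The equation `W' = W * U` says that left
multiplication by `W` intertwines `D` with `d/dt`, i.e. `(W * X)' = W * (D X)` for every `X`, and
(EqUV) reads `D U = V`, `D V = α + β U + γ V`. Taking `X = U` and then `X = V` gives the two
derivatives.
-/

section

variable {𝕜 l m n : Type*} [NontriviallyNormedField 𝕜] {t : 𝕜}

lemma hasDerivAt_matrix_iff [Finite n] {E : Type*} [NormedAddCommGroup E] [NormedSpace 𝕜 E]
    {M : 𝕜 → Matrix m n E} {M' : Matrix m n E} :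
    HasDerivAt M M' t ↔ ∀ i j, HasDerivAt (fun s => M s i j) (M' i j) t := by
  have := Fintype.ofFinite n
  exact hasDerivAt_pi.trans <| forall_congr' fun _ => hasDerivAt_pi

variable {A : Type*} [NormedRing A] [NormedAlgebra 𝕜 A] [Fintype m]

-- `HasDerivAt.mul` needs a normed ring, but the elementwise norm is not submultiplicative.
lemma hasDerivAt_matrix_mul [Finite n] {M : 𝕜 → Matrix l m A} {P : 𝕜 → Matrix m n A}
    {M' : Matrix l m A} {P' : Matrix m n A} (hM : HasDerivAt M M' t) (hP : HasDerivAt P P' t) :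
    HasDerivAt (fun s => M s * P s) (M' * P t + M t * P') t := by
  rw [hasDerivAt_matrix_iff] at hM hP ⊢
  intro i j
  simp only [Matrix.mul_apply, Matrix.add_apply, ← Finset.sum_add_distrib]
  exact HasDerivAt.fun_sum fun k _ => (hM i k).mul (hP k j)

lemma hasDerivAt_matrix_mul_of_intertwining [Finite n] {W : 𝕜 → Matrix l m A}
    {U : 𝕜 → Matrix m m A} {X : 𝕜 → Matrix m n A} {Y : Matrix m n A}
    (hW : HasDerivAt W (W t * U t) t) (hX : HasDerivAt X (-(U t * X t) + Y) t) :
    HasDerivAt (fun s => W s * X s) (W t * Y) t := by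
  have product_rule : W t * U t * X t + W t * (-(U t * X t) + Y) = W t * Y := by
    rw [Matrix.mul_add, Matrix.mul_neg, Matrix.mul_assoc, add_neg_cancel_left]
  exact product_rule ▸ hasDerivAt_matrix_mul hW hX

theorem goldfish_stmt1_general [DecidableEq m] {R : Type*} [Monoid R] [DistribMulAction R A]
    [SMulCommClass R A A] {α β γ : R} {U V : 𝕜 → Matrix m m A} {W : 𝕜 → Matrix l m A}
    (hU : HasDerivAt U (-(U t * U t) + V t) t)
    (hV : HasDerivAt V
      (-(U t * V t) + α • (1 : Matrix m m A) + β • U t + γ • V t) t)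
    (hW : HasDerivAt W (W t * U t) t) :
    HasDerivAt (fun s => W s * U s) (W t * V t) t ∧
      HasDerivAt (fun s => W s * V s)
        (α • W t + β • (W t * U t) + γ • (W t * V t)) t := by
  refine ⟨hasDerivAt_matrix_mul_of_intertwining hW hU, ?_⟩
  have covariant_derivative :
      HasDerivAt V (-(U t * V t) + (α • (1 : Matrix m m A) + β • U t + γ • V t)) t := by
    simpa only [add_assoc] using hV
  simpa only [Matrix.mul_add, Matrix.mul_smul, Matrix.mul_one] using
    hasDerivAt_matrix_mul_of_intertwining hW covariant_derivative

end

/-- If `U, V : ℝ → M` are differentiable and satisfy the matrix system (EqUV),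
and `W : ℝ → M` is differentiable with `W' = W·U`, then `W` is three times differentiable,
`W'' = W·V`, and `W''' = α•W + β•W' + γ•W''`. -/
theorem goldfish_stmt1 (N : ℕ) (hN : 0 < N) (α β γ : ℂ)
    (U V W : ℝ → Matrix (Fin N) (Fin N) ℂ)
    (hU : ∀ t : ℝ, HasDerivAt U (-(U t * U t) + V t) t)
    (hV : ∀ t : ℝ, HasDerivAt V
      (-(U t * V t) + α • (1 : Matrix (Fin N) (Fin N) ℂ) + β • U t + γ • V t) t)
    (hW : ∀ t : ℝ, HasDerivAt W (W t * U t) t) :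
    ∀ t : ℝ,
      HasDerivAt (fun s => W s * U s) (W t * V t) t ∧
      HasDerivAt (fun s => W s * V s)
        (α • W t + β • (W t * U t) + γ • (W t * V t)) t :=
  fun t => goldfish_stmt1_general (hU t) (hV t) (hW t)
end

section
/- Let ω₁, ω₂, ω₃ be complex numbers, set α = −i·ω₁ω₂ω₃, β = ω₁ω₂ + ω₂ω₃ + ω₃ω₁, γ = i·(ω₁ + ω₂ + ω₃), and let A, B be constant N×N complex matrices. Define S(t) = I + A·exp(i(ω₂−ω₁)t) + B·exp(i(ω₃−ω₁)t), U(t) = i·S(t)⁻¹·(ω₁I + ω₂·A·exp(i(ω₂−ω₁)t) + ω₃·B·exp(i(ω₃−ω₁)t)), and V(t) = −S(t)⁻¹·(ω₁²I + ω₂²·A·exp(i(ω₂−ω₁)t) + ω₃²·B·exp(i(ω₃−ω₁)t)). Then at every real t such that S is invertible on a neighborhood of t, U and V are differentiable at t and satisfy the matrix system (EqUV): U'(t) = −U(t)² + V(t) and V'(t) = −U(t)·V(t) + α·I + β·U(t) + γ·V(t). -/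
attribute [local instance] Matrix.normedAddCommGroup Matrix.normedSpace

open Filter

/-!
Multiplying `S`, and the combinations it multiplies, by the scalar `e^{iω₁t}` does not change `U`
and `V`, and turns them into `U = W⁻¹ W'` and `V = W⁻¹ W''` with
`W(t) = e^{iω₁t} I + e^{iω₂t} A + e^{iω₃t} B`. The quotient rule gives
`(W⁻¹ W⁽ᵏ⁾)' = -(W⁻¹ W') (W⁻¹ W⁽ᵏ⁾) + W⁻¹ W⁽ᵏ⁺¹⁾` for every `k`, and the chain closes after `k = 2`
because `iω₁, iω₂, iω₃` are the roots of `z³ = α + β z + γ z²`, whence `W''' = α W + β W' + γ W''`.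
-/

theorem hasDerivAt_ringInverse_mul_s3 {𝕜 R : Type*} [NontriviallyNormedField 𝕜] [NormedRing R]
    [HasSummableGeomSeries R] [NormedAlgebra 𝕜 R] {f g : 𝕜 → R} {f' g' : R} {t : 𝕜}
    (hf : HasDerivAt f f' t) (hg : HasDerivAt g g' t) (hu : IsUnit (f t)) :
    HasDerivAt (fun s => Ring.inverse (f s) * g s)
      (-(Ring.inverse (f t) * f' * (Ring.inverse (f t) * g t)) + Ring.inverse (f t) * g') t := by
  obtain ⟨u, hu⟩ := hu
  have hinv := hasFDerivAt_ringInverse (𝕜 := 𝕜) u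
  rw [hu] at hinv
  refine ((hinv.comp_hasDerivAt t hf).mul hg).congr_deriv ?_
  simp [← hu, mul_assoc]

theorem ringInverse_smul_mul_smul {K R : Type*} [CommSemiring K] [Semiring R] [Algebra K R] {z : K}
    (hz : IsUnit z) (a b : R) : Ring.inverse (z • a) * (z • b) = Ring.inverse a * b := by
  rw [Algebra.smul_def, Algebra.smul_def, Ring.mul_inverse_rev' (Algebra.commutes z a), mul_assoc,
    Ring.inverse_mul_cancel_left _ _ (hz.map (algebraMap K R))]

section ExponentialSums

variable {ι R : Type*} [Fintype ι]

/-- The `k`-th derivative of the exponential sum `∑ j, e^{c j t} A j` of a real variable `t`;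
the sum itself is the case `k = 0`. -/
noncomputable def expSumDeriv [AddCommMonoid R] [Module ℂ R] (c : ι → ℂ) (A : ι → R) (k : ℕ)
    (t : ℝ) : R :=
  ∑ j, (c j ^ k * Complex.exp (c j * t)) • A j

/-- The quotient `W⁻¹ W⁽ᵏ⁾` for the exponential sum `W = ∑ j, e^{c j t} A j`; for
exponents `(iω₁, iω₂, iω₃)` and coefficients `(I, A, B)` it is `U` of (EqUV) when `k = 1` and `V`
when `k = 2`. -/
noncomputable def expSumQuotient [Semiring R] [Module ℂ R] (c : ι → ℂ) (A : ι → R) (k : ℕ)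
    (t : ℝ) : R :=
  Ring.inverse (expSumDeriv c A 0 t) * expSumDeriv c A k t

theorem hasDerivAt_expSumDeriv [NormedAddCommGroup R] [NormedSpace ℂ R] (c : ι → ℂ) (A : ι → R)
    (k : ℕ) (t : ℝ) :
    HasDerivAt (expSumDeriv c A k) (expSumDeriv c A (k + 1) t) t := by
  refine HasDerivAt.fun_sum fun j _ => ?_
  have hexp : HasDerivAt (fun s : ℝ => Complex.exp (c j * s))
      (Complex.exp (c j * t) * (c j * 1)) t :=
    ((hasDerivAt_id t).ofReal_comp.const_mul (c j)).cexp
  refine ((hexp.const_mul (c j ^ k)).smul_const (A j)).congr_deriv ?_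
  ring_nf

theorem expSumDeriv_add_three_of_roots [AddCommMonoid R] [Module ℂ R] {c : ι → ℂ} {α β γ : ℂ}
    (hc : ∀ j, c j ^ 3 = α + β * c j + γ * c j ^ 2) (A : ι → R) (k : ℕ) (t : ℝ) :
    expSumDeriv c A (k + 3) t = α • expSumDeriv c A k t + β • expSumDeriv c A (k + 1) t
      + γ • expSumDeriv c A (k + 2) t := by
  simp only [expSumDeriv, Finset.smul_sum, ← Finset.sum_add_distrib, smul_smul, ← add_smul,
    pow_add _ k 3, hc]
  refine Finset.sum_congr rfl fun j _ => ?_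
  ring_nf

theorem expSumQuotient_zero [Semiring R] [Module ℂ R] {c : ι → ℂ} {A : ι → R} {t : ℝ}
    (hu : IsUnit (expSumDeriv c A 0 t)) : expSumQuotient c A 0 t = 1 :=
  Ring.inverse_mul_cancel _ hu

theorem expSumQuotient_add_three_of_roots [Semiring R] [Algebra ℂ R] {c : ι → ℂ} {α β γ : ℂ}
    (hc : ∀ j, c j ^ 3 = α + β * c j + γ * c j ^ 2) (A : ι → R) (k : ℕ) (t : ℝ) :
    expSumQuotient c A (k + 3) t = α • expSumQuotient c A k t + β • expSumQuotient c A (k + 1) t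
      + γ • expSumQuotient c A (k + 2) t := by
  simp only [expSumQuotient, expSumDeriv_add_three_of_roots hc, mul_add, mul_smul_comm]

theorem hasDerivAt_expSumQuotient [NormedRing R] [HasSummableGeomSeries R] [NormedAlgebra ℂ R]
    {c : ι → ℂ} {A : ι → R} {t : ℝ}
    (hu : IsUnit (expSumDeriv c A 0 t)) (k : ℕ) :
    HasDerivAt (expSumQuotient c A k)
      (-(expSumQuotient c A 1 t * expSumQuotient c A k t) + expSumQuotient c A (k + 1) t) t :=
  hasDerivAt_ringInverse_mul_s3 (hasDerivAt_expSumDeriv c A 0 t) (hasDerivAt_expSumDeriv c A k t) hu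

theorem expSumDeriv_I_mul_eq_exp_smul [AddCommMonoid R] [Module ℂ R] (ω₁ ω₂ ω₃ : ℂ) (A B C : R)
    (k : ℕ) (t : ℝ) :
    expSumDeriv ![Complex.I * ω₁, Complex.I * ω₂, Complex.I * ω₃] ![A, B, C] k t
      = Complex.exp (Complex.I * ω₁ * t) • Complex.I ^ k • (ω₁ ^ k • A
        + (ω₂ ^ k * Complex.exp (Complex.I * (ω₂ - ω₁) * t)) • B
        + (ω₃ ^ k * Complex.exp (Complex.I * (ω₃ - ω₁) * t)) • C) := by
  have exp_split (ω : ℂ) : Complex.exp (Complex.I * ω * t)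
      = Complex.exp (Complex.I * ω₁ * t) * Complex.exp (Complex.I * (ω - ω₁) * t) := by
    rw [← Complex.exp_add]; ring_nf
  simp only [expSumDeriv, Fin.sum_univ_three, Matrix.cons_val, exp_split ω₂, exp_split ω₃]
  module

theorem expSumQuotient_I_mul_eq_ringInverse_mul [Semiring R] [Algebra ℂ R] (ω₁ ω₂ ω₃ : ℂ)
    (A B C : R) (k : ℕ) (t : ℝ) :
    expSumQuotient ![Complex.I * ω₁, Complex.I * ω₂, Complex.I * ω₃] ![A, B, C] k t
      = Complex.I ^ k • (Ring.inverse (A + Complex.exp (Complex.I * (ω₂ - ω₁) * t) • B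
          + Complex.exp (Complex.I * (ω₃ - ω₁) * t) • C)
        * (ω₁ ^ k • A + (ω₂ ^ k * Complex.exp (Complex.I * (ω₂ - ω₁) * t)) • B
          + (ω₃ ^ k * Complex.exp (Complex.I * (ω₃ - ω₁) * t)) • C)) := by
  simp only [expSumQuotient, expSumDeriv_I_mul_eq_exp_smul,
    ringInverse_smul_mul_smul (Complex.exp_ne_zero _).isUnit, pow_zero, one_smul, one_mul,
    mul_smul_comm]

end ExponentialSums

theorem cubic_sub_eq_mul_sub_I_mul (ω₁ ω₂ ω₃ z : ℂ) :
    z ^ 3 - (-Complex.I * (ω₁ * ω₂ * ω₃) + (ω₁ * ω₂ + ω₂ * ω₃ + ω₃ * ω₁) * z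
        + Complex.I * (ω₁ + ω₂ + ω₃) * z ^ 2)
      = (z - Complex.I * ω₁) * (z - Complex.I * ω₂) * (z - Complex.I * ω₃) := by
  linear_combination (-(ω₁ * ω₂ + ω₂ * ω₃ + ω₃ * ω₁) * z + Complex.I * (ω₁ * ω₂ * ω₃))
    * Complex.I_sq

theorem goldfish_stmt3_general {R : Type*} [NormedRing R] [HasSummableGeomSeries R]
    [NormedAlgebra ℂ R] (ω₁ ω₂ ω₃ α β γ : ℂ)
    (hα : α = -Complex.I * (ω₁ * ω₂ * ω₃))
    (hβ : β = ω₁ * ω₂ + ω₂ * ω₃ + ω₃ * ω₁)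
    (hγ : γ = Complex.I * (ω₁ + ω₂ + ω₃))
    (A B : R) (S U V : ℝ → R)
    (hS : ∀ t : ℝ, S t = 1 + Complex.exp (Complex.I * (ω₂ - ω₁) * t) • A
      + Complex.exp (Complex.I * (ω₃ - ω₁) * t) • B)
    (hU : ∀ t : ℝ, U t = Complex.I • (Ring.inverse (S t) *
      (ω₁ • (1 : R) + (ω₂ * Complex.exp (Complex.I * (ω₂ - ω₁) * t)) • A
        + (ω₃ * Complex.exp (Complex.I * (ω₃ - ω₁) * t)) • B)))
    (hV : ∀ t : ℝ, V t = -(Ring.inverse (S t) *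
      (ω₁ ^ 2 • (1 : R) + (ω₂ ^ 2 * Complex.exp (Complex.I * (ω₂ - ω₁) * t)) • A
        + (ω₃ ^ 2 * Complex.exp (Complex.I * (ω₃ - ω₁) * t)) • B)))
    (t : ℝ) (hu : IsUnit (S t)) :
    HasDerivAt U (-(U t * U t) + V t) t ∧
      HasDerivAt V (-(U t * V t) + α • (1 : R) + β • U t + γ • V t) t := by
  set c := ![Complex.I * ω₁, Complex.I * ω₂, Complex.I * ω₃] with hc
  have hU_eq : U = expSumQuotient c ![1, A, B] 1 := by
    funext s; simp [hc, hU, hS, expSumQuotient_I_mul_eq_ringInverse_mul]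
  have hV_eq : V = expSumQuotient c ![1, A, B] 2 := by
    funext s; simp [hc, hV, hS, expSumQuotient_I_mul_eq_ringInverse_mul]
  have hW : IsUnit (expSumDeriv c ![1, A, B] 0 t) := by
    rw [expSumDeriv_I_mul_eq_exp_smul]
    have := hu.smul (Units.mk0 _ (Complex.exp_ne_zero (Complex.I * ω₁ * t)))
    simpa [hS] using this
  have hroots (j) : c j ^ 3 = α + β * c j + γ * c j ^ 2 := by
    rw [← sub_eq_zero, hα, hβ, hγ, cubic_sub_eq_mul_sub_I_mul]
    fin_cases j <;> simp [hc]
  have hclose : expSumQuotient c ![1, A, B] 3 t = α • (1 : R)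
      + β • expSumQuotient c ![1, A, B] 1 t + γ • expSumQuotient c ![1, A, B] 2 t := by
    simpa only [expSumQuotient_zero hW] using
      expSumQuotient_add_three_of_roots hroots ![1, A, B] 0 t
  rw [hU_eq, hV_eq]
  refine ⟨hasDerivAt_expSumQuotient hW 1, (hasDerivAt_expSumQuotient hW 2).congr_deriv ?_⟩
  rw [hclose]
  abel

section LinftyOpNorm

attribute [local instance] Matrix.linftyOpNormedRing

-- Completeness is that of the product uniformity on matrices, which agrees with the uniformity of
-- the `ℓ^∞` operator norm only after unfolding, so instance search does not find it.
theorem hasSummableGeomSeries_matrix_linftyOp {n R : Type*} [Fintype n] [DecidableEq n]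
    [NormedRing R] [CompleteSpace R] : HasSummableGeomSeries (Matrix n n R) :=
  @instHasSummableGeomSeriesOfCompleteSpace _ _ (Matrix.instCompleteSpace n n R)

end LinftyOpNorm

/-- With `α = −i·ω₁ω₂ω₃`, `β = ω₁ω₂+ω₂ω₃+ω₃ω₁`, `γ = i(ω₁+ω₂+ω₃)` and
`S(t) = I + A·e^{i(ω₂−ω₁)t} + B·e^{i(ω₃−ω₁)t}`,
`U(t) = i·S(t)⁻¹·(ω₁I + ω₂A·e^{i(ω₂−ω₁)t} + ω₃B·e^{i(ω₃−ω₁)t})`,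
`V(t) = −S(t)⁻¹·(ω₁²I + ω₂²A·e^{i(ω₂−ω₁)t} + ω₃²B·e^{i(ω₃−ω₁)t})`,
at every `t` such that `S` is invertible on a neighborhood of `t`, `U` and `V` are
differentiable at `t` and satisfy the matrix system (EqUV). -/
theorem goldfish_stmt3 (N : ℕ) (hN : 0 < N) (ω₁ ω₂ ω₃ α β γ : ℂ)
    (hα : α = -Complex.I * (ω₁ * ω₂ * ω₃))
    (hβ : β = ω₁ * ω₂ + ω₂ * ω₃ + ω₃ * ω₁)
    (hγ : γ = Complex.I * (ω₁ + ω₂ + ω₃))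
    (A B : Matrix (Fin N) (Fin N) ℂ)
    (S U V : ℝ → Matrix (Fin N) (Fin N) ℂ)
    (hS : ∀ t : ℝ, S t = 1 + Complex.exp (Complex.I * (ω₂ - ω₁) * (t : ℂ)) • A
      + Complex.exp (Complex.I * (ω₃ - ω₁) * (t : ℂ)) • B)
    (hU : ∀ t : ℝ, U t = Complex.I • ((S t)⁻¹ *
      (ω₁ • (1 : Matrix (Fin N) (Fin N) ℂ)
        + (ω₂ * Complex.exp (Complex.I * (ω₂ - ω₁) * (t : ℂ))) • A
        + (ω₃ * Complex.exp (Complex.I * (ω₃ - ω₁) * (t : ℂ))) • B)))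
    (hV : ∀ t : ℝ, V t = -((S t)⁻¹ *
      (ω₁ ^ 2 • (1 : Matrix (Fin N) (Fin N) ℂ)
        + (ω₂ ^ 2 * Complex.exp (Complex.I * (ω₂ - ω₁) * (t : ℂ))) • A
        + (ω₃ ^ 2 * Complex.exp (Complex.I * (ω₃ - ω₁) * (t : ℂ))) • B))) :
    ∀ t : ℝ, (∀ᶠ s in nhds t, IsUnit (S s)) →
      HasDerivAt U (-(U t * U t) + V t) t ∧
      HasDerivAt V (-(U t * V t) + α • (1 : Matrix (Fin N) (Fin N) ℂ)
        + β • U t + γ • V t) t := by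
  simp only [Matrix.nonsing_inv_eq_ringInverse] at hU hV
  -- The entrywise norm is not submultiplicative; the `ℓ^∞` operator norm is, and it has the same
  -- topology, hence the same derivatives.
  let := Matrix.linftyOpNormedRing (n := Fin N) (α := ℂ)
  let := Matrix.linftyOpNormedAlgebra (R := ℂ) (n := Fin N) (α := ℂ)
  have := hasSummableGeomSeries_matrix_linftyOp (n := Fin N) (R := ℂ)
  exact fun t ht => goldfish_stmt3_general ω₁ ω₂ ω₃ α β γ hα hβ hγ A B S U V hS hU hV t
    ht.self_of_nhds
end

section
/- Let ω > 0 be real, k₁, k₂, k₃ integers, and ω₁, ω₂, ω₃ complex numbers with Re(ω_j) = k_j·ω for j = 1,2,3, Im(ω₁) = Im(ω₂), and Im(ω₁) < Im(ω₃); set T = 2π/ω. Let A, B be constant N×N complex matrices such that I + A·exp(iθ) is invertible for every real θ. Define S(t) = I + A·exp(i(ω₂−ω₁)t) + B·exp(i(ω₃−ω₁)t) and U(t) = i·S(t)⁻¹·(ω₁I + ω₂·A·exp(i(ω₂−ω₁)t) + ω₃·B·exp(i(ω₃−ω₁)t)). Then there exists t₀ such that S(t) is invertible for all t ≥ t₀,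 and ‖U(t+T) − U(t)‖ → 0 as t → +∞: the matrix U is asymptotically periodic with period T. -/
/-!
Since `ω₂ - ω₁` is a real multiple of `ω` and `Im ω₁ < Im ω₃`, dropping the terms in `B` changes `S`
and the second factor of `U` by quantities that tend to `0`, and leaves continuous `T`-periodic
functions `S₀`, `V₀`. The pair `(S₀, V₀)` runs through a compact set on which `S₀` is invertible.
The pairs with invertible first component form a neighbourhood of this set, and `(x, y) ↦ x⁻¹ y` is
uniformly continuous at it; so `U` is asymptotic to a `T`-periodic function.
-/

attribute [local instance] Matrix.normedAddCommGroup Matrix.normedSpace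

open Filter

open scoped Topology Uniformity Ring

section UniformSpace

variable {ι X Y : Type*} [UniformSpace X] [UniformSpace Y] {l : Filter ι} {f g : ι → X} {K : Set X}

lemma tendsto_nhdsSet_of_tendsto_uniformity (hK : IsCompact K) (hg : ∀ t, g t ∈ K)
    (hgf : Tendsto (fun t => (g t, f t)) l (𝓤 X)) : Tendsto f l (𝓝ˢ K) := by
  refine (hK.nhdsSet_basis_uniformity (basis_sets _)).tendsto_right_iff.2 fun V hV => ?_
  filter_upwards [hgf hV] with t ht
  exact Set.mem_biUnion (hg t) ht

lemma tendsto_uniformity_comp_of_isCompact (hK : IsCompact K) {F : X → Y}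
    (hF : ∀ x ∈ K, ContinuousAt F x) (hg : ∀ t, g t ∈ K)
    (hgf : Tendsto (fun t => (g t, f t)) l (𝓤 X)) :
    Tendsto (fun t => (F (g t), F (f t))) l (𝓤 Y) := by
  intro V hV
  have hKV := hgf.eventually (hK.uniformContinuousAt_of_continuousAt F hF hV)
  exact hKV.mono fun t ht => ht (hg t)

lemma tendsto_uniformity_iff_tendsto_sub {E : Type*} [AddGroup E] [UniformSpace E]
    [IsRightUniformAddGroup E] {f g : ι → E} :
    Tendsto (fun t => (g t, f t)) l (𝓤 E) ↔ Tendsto (fun t => f t - g t) l (𝓝 0) := by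
  rw [uniformity_eq_comap_nhds_zero, tendsto_comap_iff]
  rfl

end UniformSpace

section AsymptoticallyPeriodic

variable {X Y : Type*} [UniformSpace X] [UniformSpace Y] {f g : ℝ → X} {T : ℝ}

/-- `f` is asymptotically periodic with period `T`: `f (t + T)` gets arbitrarily close
to `f t` as `t → +∞`. Closeness is measured by entourages, so that no choice of norm is involved. -/
def AsymptoticallyPeriodic (f : ℝ → X) (T : ℝ) : Prop :=
  Tendsto (fun t => (f t, f (t + T))) atTop (𝓤 X)

lemma asymptoticallyPeriodic_iff_tendsto_sub {E : Type*} [AddGroup E] [UniformSpace E]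
    [IsRightUniformAddGroup E] {f : ℝ → E} :
    AsymptoticallyPeriodic f T ↔ Tendsto (fun t => f (t + T) - f t) atTop (𝓝 0) :=
  tendsto_uniformity_iff_tendsto_sub

lemma asymptoticallyPeriodic_of_tendsto_uniformity (hg : Function.Periodic g T)
    (hgf : Tendsto (fun t => (g t, f t)) atTop (𝓤 X)) : AsymptoticallyPeriodic f T := by
  have hshift : Tendsto (fun t => (g t, f (t + T))) atTop (𝓤 X) := by
    simpa only [Function.comp_def, id_eq, hg _] using
      hgf.comp (tendsto_atTop_add_const_right atTop T tendsto_id)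
  exact hgf.uniformity_symm.uniformity_trans hshift

lemma asymptoticallyPeriodic_comp {F : X → Y} (hg : Function.Periodic g T) (hT : T ≠ 0)
    (hgc : Continuous g) (hF : ∀ t, ContinuousAt F (g t))
    (hgf : Tendsto (fun t => (g t, f t)) atTop (𝓤 X)) :
    AsymptoticallyPeriodic (fun t => F (f t)) T :=
  asymptoticallyPeriodic_of_tendsto_uniformity (hg.comp F) <|
    tendsto_uniformity_comp_of_isCompact (hg.compact_of_continuous hT hgc)
      (Set.forall_mem_range.2 hF) Set.mem_range_self hgf

end AsymptoticallyPeriodic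

section IsOpenUnits

lemma isOpen_setOf_isUnit {M : Type*} [Monoid M] [TopologicalSpace M] [IsOpenUnits M] :
    IsOpen {x : M | IsUnit x} :=
  IsOpenUnits.isOpenEmbedding_unitsVal.isOpen_range

lemma continuousAt_ringInverse_of_isUnit {M : Type*} [MonoidWithZero M] [TopologicalSpace M]
    [IsOpenUnits M] {x : M} (hx : IsUnit x) : ContinuousAt Ring.inverse x := by
  obtain ⟨u, rfl⟩ := hx
  have hcomp : Ring.inverse ∘ Units.val = fun v : Mˣ => (↑v⁻¹ : M) := funext Ring.inverse_unit
  rw [← IsOpenUnits.isOpenEmbedding_unitsVal.continuousAt_iff, hcomp]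
  exact Units.continuous_coe_inv.continuousAt

instance isOpenUnits_matrix {n K : Type*} [Fintype n] [DecidableEq n] [CommRing K]
    [TopologicalSpace K] [IsTopologicalRing K] [IsOpenUnits K] : IsOpenUnits (Matrix n n K) where
  isOpenEmbedding_unitsVal := by
    refine ⟨Units.isEmbedding_val_mk' (f := Inv.inv) (fun M hM => ?_)
      fun u => (Matrix.coe_units_inv u).symm, ?_⟩
    · have hdet : IsUnit M.det := (Matrix.isUnit_iff_isUnit_det M).1 hM
      exact (continuousAt_matrix_inv M
        (continuousAt_ringInverse_of_isUnit hdet)).continuousWithinAt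
    · have hrange : Set.range Units.val = {M : Matrix n n K | IsUnit M.det} :=
        Set.ext Matrix.isUnit_iff_isUnit_det
      rw [hrange]
      exact isOpen_setOf_isUnit.preimage continuous_id.matrix_det

end IsOpenUnits

section UniformAddGroup

variable {R : Type*} [Ring R] [UniformSpace R] [IsUniformAddGroup R] [IsOpenUnits R]
variable {S S₀ V V₀ : ℝ → R} {T : ℝ}

lemma eventually_isUnit_of_tendsto_sub_periodic (hS₀ : Function.Periodic S₀ T) (hT : T ≠ 0)
    (hS₀c : Continuous S₀) (hunit : ∀ t, IsUnit (S₀ t))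
    (hS : Tendsto (fun t => S t - S₀ t) atTop (𝓝 0)) : ∀ᶠ t in atTop, IsUnit (S t) := by
  have hnear : Tendsto S atTop (𝓝ˢ (Set.range S₀)) :=
    tendsto_nhdsSet_of_tendsto_uniformity (hS₀.compact_of_continuous hT hS₀c) Set.mem_range_self
      (tendsto_uniformity_iff_tendsto_sub.2 hS)
  exact hnear (isOpen_setOf_isUnit.mem_nhdsSet.2 (Set.range_subset_iff.2 hunit))

lemma asymptoticallyPeriodic_inverse_mul [ContinuousMul R] (hS₀ : Function.Periodic S₀ T)
    (hV₀ : Function.Periodic V₀ T) (hT : T ≠ 0) (hS₀c : Continuous S₀) (hV₀c : Continuous V₀)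
    (hunit : ∀ t, IsUnit (S₀ t)) (hS : Tendsto (fun t => S t - S₀ t) atTop (𝓝 0))
    (hV : Tendsto (fun t => V t - V₀ t) atTop (𝓝 0)) :
    AsymptoticallyPeriodic (fun t => (S t)⁻¹ʳ * V t) T := by
  have hper : Function.Periodic (fun t => (S₀ t, V₀ t)) T := fun t => Prod.ext (hS₀ t) (hV₀ t)
  have hsub : Tendsto (fun t => (S t, V t) - (S₀ t, V₀ t)) atTop (𝓝 0) := hS.prodMk_nhds hV
  have hcont : ∀ t, ContinuousAt (fun p : R × R => p.1⁻¹ʳ * p.2) (S₀ t, V₀ t) := fun t =>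
    ((continuousAt_ringInverse_of_isUnit (hunit t)).comp_of_eq continuousAt_fst rfl).mul
      continuousAt_snd
  exact asymptoticallyPeriodic_comp hper hT (hS₀c.prodMk hV₀c) hcont
    (tendsto_uniformity_iff_tendsto_sub.2 hsub)

end UniformAddGroup

lemma tendsto_exp_I_mul_atTop_nhds_zero {a : ℂ} (ha : 0 < a.im) :
    Tendsto (fun t : ℝ => Complex.exp (Complex.I * a * t)) atTop (𝓝 0) := by
  rw [Complex.tendsto_exp_nhds_zero_iff]
  simpa using tendsto_id.const_mul_atTop_of_neg (neg_lt_zero.2 ha)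

lemma periodic_exp_I_mul_int_mul {ω : ℝ} (hω : ω ≠ 0) (k : ℤ) :
    Function.Periodic (fun t : ℝ => Complex.exp (Complex.I * (k * ω) * t)) (2 * Real.pi / ω) := by
  intro t
  have hω' : (ω : ℂ) ≠ 0 := Complex.ofReal_ne_zero.2 hω
  refine Complex.exp_eq_exp_iff_exists_int.2 ⟨k, ?_⟩
  push_cast
  field_simp

theorem goldfish_stmt6_general {R : Type*} [Ring R] [UniformSpace R] [IsUniformAddGroup R]
    [ContinuousMul R] [IsOpenUnits R] [Algebra ℂ R] [ContinuousSMul ℂ R]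
    {ω : ℝ} (hω : ω ≠ 0) {k : ℤ} {ω₁ ω₂ ω₃ : ℂ} (h12 : ω₂ - ω₁ = k * ω)
    (him13 : ω₁.im < ω₃.im) {A B : R}
    (hA : ∀ t : ℝ, IsUnit (1 + Complex.exp (Complex.I * (ω₂ - ω₁) * t) • A)) {S U : ℝ → R}
    (hS : ∀ t : ℝ, S t = 1 + Complex.exp (Complex.I * (ω₂ - ω₁) * t) • A
      + Complex.exp (Complex.I * (ω₃ - ω₁) * t) • B)
    (hU : ∀ t : ℝ, U t = Complex.I • ((S t)⁻¹ʳ *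
      (ω₁ • 1 + (ω₂ * Complex.exp (Complex.I * (ω₂ - ω₁) * t)) • A
        + (ω₃ * Complex.exp (Complex.I * (ω₃ - ω₁) * t)) • B))) :
    (∀ᶠ t in atTop, IsUnit (S t)) ∧ AsymptoticallyPeriodic U (2 * Real.pi / ω) := by
  let z : ℝ → ℂ := fun t => Complex.exp (Complex.I * (ω₂ - ω₁) * t)
  let w : ℝ → ℂ := fun t => Complex.exp (Complex.I * (ω₃ - ω₁) * t)
  have hT : 2 * Real.pi / ω ≠ 0 := div_ne_zero Real.two_pi_pos.ne' hω
  have hz : Function.Periodic z (2 * Real.pi / ω) := by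
    simpa only [z, h12] using periodic_exp_I_mul_int_mul hω k
  have hw : Tendsto w atTop (𝓝 0) :=
    tendsto_exp_I_mul_atTop_nhds_zero (by simpa using him13)
  let S₀ : ℝ → R := fun t => 1 + z t • A
  let V₀ : ℝ → R := fun t => Complex.I • (ω₁ • 1 + (ω₂ * z t) • A)
  let V : ℝ → R := fun t => Complex.I • (ω₁ • 1 + (ω₂ * z t) • A + (ω₃ * w t) • B)
  have hS₀ : Function.Periodic S₀ (2 * Real.pi / ω) := hz.comp fun x => 1 + x • A
  have hV₀ : Function.Periodic V₀ (2 * Real.pi / ω) :=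
    hz.comp fun x => Complex.I • (ω₁ • 1 + (ω₂ * x) • A)
  have hSS₀ : Tendsto (fun t => S t - S₀ t) atTop (𝓝 0) := by
    simpa [hS, S₀, z, w] using hw.smul_const B
  have hVV₀ : Tendsto (fun t => V t - V₀ t) atTop (𝓝 0) := by
    simpa [V, V₀, ← smul_sub] using ((hw.const_mul ω₃).smul_const B).const_smul Complex.I
  have hUV : U = fun t => (S t)⁻¹ʳ * V t :=
    funext fun t => (hU t).trans (mul_smul_comm _ _ _).symm
  refine ⟨eventually_isUnit_of_tendsto_sub_periodic hS₀ hT (by fun_prop) hA hSS₀, ?_⟩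
  rw [hUV]
  exact asymptoticallyPeriodic_inverse_mul hS₀ hV₀ hT (by fun_prop) (by fun_prop) hA hSS₀ hVV₀

/-- If `Re(ωⱼ) = kⱼ·ω` (`ω > 0` real, `kⱼ` integers), `Im(ω₁) = Im(ω₂)`,
`Im(ω₁) < Im(ω₃)`, `T = 2π/ω`, and `I + A·e^{iθ}` is invertible for every real `θ`, then
`S(t) = I + A·e^{i(ω₂−ω₁)t} + B·e^{i(ω₃−ω₁)t}` is invertible for all sufficiently large `t`
and `‖U(t+T) − U(t)‖ → 0` as `t → +∞`: `U` is asymptotically periodic with period `T`. -/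
theorem goldfish_stmt6 (N : ℕ) (hN : 0 < N) (ω : ℝ) (hω : 0 < ω)
    (k₁ k₂ k₃ : ℤ) (ω₁ ω₂ ω₃ : ℂ)
    (h1 : ω₁.re = k₁ * ω) (h2 : ω₂.re = k₂ * ω) (h3 : ω₃.re = k₃ * ω)
    (him12 : ω₁.im = ω₂.im) (him13 : ω₁.im < ω₃.im)
    (T : ℝ) (hT : T = 2 * Real.pi / ω)
    (A B : Matrix (Fin N) (Fin N) ℂ)
    (hAinv : ∀ θ : ℝ, IsUnit ((1 : Matrix (Fin N) (Fin N) ℂ)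
      + Complex.exp (Complex.I * (θ : ℂ)) • A))
    (S U : ℝ → Matrix (Fin N) (Fin N) ℂ)
    (hS : ∀ t : ℝ, S t = 1
      + Complex.exp (Complex.I * (ω₂ - ω₁) * (t : ℂ)) • A
      + Complex.exp (Complex.I * (ω₃ - ω₁) * (t : ℂ)) • B)
    (hU : ∀ t : ℝ, U t = Complex.I • ((S t)⁻¹ *
      (ω₁ • (1 : Matrix (Fin N) (Fin N) ℂ)
        + (ω₂ * Complex.exp (Complex.I * (ω₂ - ω₁) * (t : ℂ))) • A
        + (ω₃ * Complex.exp (Complex.I * (ω₃ - ω₁) * (t : ℂ))) • B))) :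
    (∃ t₀ : ℝ, ∀ t ≥ t₀, IsUnit (S t)) ∧
    Tendsto (fun t : ℝ => ‖U (t + T) - U t‖) atTop (nhds 0) := by
  have h12 : ω₂ - ω₁ = (k₂ - k₁ : ℤ) * ω := by
    apply Complex.ext <;> simp [h1, h2, him12, sub_mul]
  have hA : ∀ t : ℝ, IsUnit (1 + Complex.exp (Complex.I * (ω₂ - ω₁) * t) • A) := fun t => by
    simpa [h12, mul_assoc] using hAinv ((k₂ - k₁ : ℤ) * ω * t)
  simp only [Matrix.nonsing_inv_eq_ringInverse] at hU
  obtain ⟨hunit, hper⟩ := goldfish_stmt6_general hω.ne' h12 him13 hA hS hU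
  rw [← hT, asymptoticallyPeriodic_iff_tendsto_sub] at hper
  exact ⟨eventually_atTop.1 hunit, tendsto_zero_iff_norm_tendsto_zero.1 hper⟩
end

section
/- Let α, β, γ be complex numbers and let U, V : ℝ → M be differentiable and satisfy the matrix system (EqUV). Let R : ℝ → M be differentiable with R(t) invertible for every t, and define Z(t) = R(t)⁻¹·U(t)·R(t), Y(t) = R(t)⁻¹·V(t)·R(t), and M̂(t) = R(t)⁻¹·R'(t). Then Z and Y are differentiable and satisfy Z'(t) + [M̂(t), Z(t)] = −Z(t)² + Y(t) and Y'(t) + [M̂(t), Y(t)] = −Z(t)·Y(t) + α·I + β·Z(t) + γ·Y(t) for all t, where [A,B] = AB − BA denotes the matrix commutator. -/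
/-!
Since `(R⁻¹)' = -R⁻¹ R' R⁻¹`, the product rule gives
`(R⁻¹ X R)' = -[R⁻¹ R', R⁻¹ X R] + R⁻¹ X' R` for every differentiable `X`. Conjugation by `R` is
moreover an algebra automorphism, so for `X = U` and `X = V` it carries the right-hand side
`R⁻¹ X' R` to the same expression in `Z` and `Y`.
-/

section Conjugation

open scoped Ring

theorem conj_mul_conj {M₀ : Type*} [MonoidWithZero M₀] {r : M₀} (hr : IsUnit r) (a b : M₀) :
    r⁻¹ʳ * a * r * (r⁻¹ʳ * b * r) = r⁻¹ʳ * (a * b) * r := by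
  simp only [mul_assoc, Ring.mul_inverse_cancel_left _ _ hr]

variable {𝕜 A : Type*} [NontriviallyNormedField 𝕜] [NormedRing A] [NormedAlgebra 𝕜 A]
  [HasSummableGeomSeries A] {t : 𝕜}

theorem hasDerivAt_ringInverse_comp {R : 𝕜 → A} {R' : A} (hR : HasDerivAt R R' t)
    (hRu : IsUnit (R t)) :
    HasDerivAt (fun s ↦ (R s)⁻¹ʳ) (-((R t)⁻¹ʳ * R' * (R t)⁻¹ʳ)) t := by
  obtain ⟨u, hu⟩ := hRu
  have hinv := hasFDerivAt_ringInverse (𝕜 := 𝕜) u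
  rw [hu] at hinv
  simpa [← hu, Function.comp_def] using hinv.comp_hasDerivAt t hR

theorem hasDerivAt_conj {X R : 𝕜 → A} {X' R' : A} (hX : HasDerivAt X X' t)
    (hR : HasDerivAt R R' t) (hRu : IsUnit (R t)) :
    HasDerivAt (fun s ↦ (R s)⁻¹ʳ * X s * R s)
      (-⁅(R t)⁻¹ʳ * R', (R t)⁻¹ʳ * X t * R t⁆ + (R t)⁻¹ʳ * X' * R t) t := by
  have hcancel : R t * ((R t)⁻¹ʳ * R') = R' := Ring.mul_inverse_cancel_left _ _ hRu
  refine (((hasDerivAt_ringInverse_comp hR hRu).fun_mul hX).fun_mul hR).congr_deriv ?_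
  rw [Ring.lie_def, mul_assoc (_ * X t) (R t), hcancel]
  noncomm_ring

theorem goldfish_stmt8_general {K : Type*} [CommSemiring K] [Algebra K A] {α β γ : K}
    {U V R Z Y : 𝕜 → A} {R' M : A}
    (hU : HasDerivAt U (-(U t * U t) + V t) t)
    (hV : HasDerivAt V (-(U t * V t) + α • (1 : A) + β • U t + γ • V t) t)
    (hR : HasDerivAt R R' t) (hRu : IsUnit (R t))
    (hZ : ∀ s, Z s = (R s)⁻¹ʳ * U s * R s) (hY : ∀ s, Y s = (R s)⁻¹ʳ * V s * R s)
    (hM : M = (R t)⁻¹ʳ * R') :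
    HasDerivAt Z (-⁅M, Z t⁆ + (-(Z t * Z t) + Y t)) t ∧
      HasDerivAt Y (-⁅M, Y t⁆ + (-(Z t * Y t) + α • (1 : A) + β • Z t + γ • Y t)) t := by
  obtain rfl : Z = _ := funext hZ
  obtain rfl : Y = _ := funext hY
  subst hM
  constructor
  · refine (hasDerivAt_conj hU hR hRu).congr_deriv ?_
    simp only [conj_mul_conj hRu, mul_add, add_mul, mul_neg, neg_mul]
  · refine (hasDerivAt_conj hV hR hRu).congr_deriv ?_
    simp only [conj_mul_conj hRu, mul_add, add_mul, mul_neg, neg_mul, mul_smul_comm,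
      smul_mul_assoc, mul_one, Ring.inverse_mul_cancel _ hRu]

end Conjugation

/-- If `U, V` satisfy the matrix system (EqUV) and `R` is differentiable and
everywhere invertible, then `Z = R⁻¹UR`, `Y = R⁻¹VR` are differentiable and satisfy
`Z' + [M̂,Z] = −Z² + Y` and `Y' + [M̂,Y] = −Z·Y + α·I + β·Z + γ·Y`, where `M̂ = R⁻¹R'`
and `[A,B] = AB − BA`. -/
theorem goldfish_stmt8 (N : ℕ) (hN : 0 < N) (α β γ : ℂ)
    (U V R Rd : ℝ → Matrix (Fin N) (Fin N) ℂ)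
    (hU : ∀ t : ℝ, HasDerivAt U (-(U t * U t) + V t) t)
    (hV : ∀ t : ℝ, HasDerivAt V
      (-(U t * V t) + α • (1 : Matrix (Fin N) (Fin N) ℂ) + β • U t + γ • V t) t)
    (hR : ∀ t : ℝ, HasDerivAt R (Rd t) t)
    (hRu : ∀ t : ℝ, IsUnit (R t))
    (Z Y Mh : ℝ → Matrix (Fin N) (Fin N) ℂ)
    (hZ : ∀ t : ℝ, Z t = (R t)⁻¹ * U t * R t)
    (hY : ∀ t : ℝ, Y t = (R t)⁻¹ * V t * R t)
    (hM : ∀ t : ℝ, Mh t = (R t)⁻¹ * Rd t) :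
    ∀ t : ℝ,
      HasDerivAt Z (-(Mh t * Z t - Z t * Mh t) + (-(Z t * Z t) + Y t)) t ∧
      HasDerivAt Y (-(Mh t * Y t - Y t * Mh t) +
        (-(Z t * Y t) + α • (1 : Matrix (Fin N) (Fin N) ℂ) + β • Z t + γ • Y t)) t := by
  simp only [Matrix.nonsing_inv_eq_ringInverse] at hZ hY hM
  -- The sup norm is not submultiplicative; the `ℓ^∞` operator norm is, and has the same topology.
  let _ : NormedRing (Matrix (Fin N) (Fin N) ℂ) := Matrix.linftyOpNormedRing
  let _ : NormedAlgebra ℝ (Matrix (Fin N) (Fin N) ℂ) := Matrix.linftyOpNormedAlgebra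
  exact fun t ↦ goldfish_stmt8_general (hU t) (hV t) (hR t) (hRu t) hZ hY (hM t)
end

section
/- Let α, β, γ be complex numbers and let U, V : ℝ → M be differentiable and satisfy the matrix system (EqUV). Let R : ℝ → M be differentiable with R(t) invertible for every t, and suppose Z(t) = R(t)⁻¹·U(t)·R(t) is diagonal, Z(t) = diag(z₁(t),…,z_N(t)), with the z_n(t) pairwise distinct for every t and each z_n differentiable. Let Y(t) = R(t)⁻¹·V(t)·R(t) with entries Y_{nm}(t), and M̂(t) = R(t)⁻¹·R'(t) with entries M̂_{nm}(t). Then for every t: (a) the diagonal entries of Y satisfy Y_{nn}(t) = z_n'(t) + z_n(t)²; (b) the off-diagonal entries of M̂ satisfy M̂_{nm}(t) = −Y_{nm}(t)/(z_n(t) − z_m(t)) for n ≠ m; and (c) each z_n is twice differentiable and satisfies the Newtonian-like equation z_n'' = −3·z_n'·z_n + γ·z_n' − z_n³ + γ·z_n² + β·z_n + α + 2·Σ_{ℓ≠n} Y_{nℓ}·Y_{ℓn}/(z_n − z_ℓ). -/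
attribute [local instance] Matrix.normedAddCommGroup Matrix.normedSpace

open Finset

open Filter Topology

/-!
If `Z = R⁻¹ W R` and `M = R⁻¹ R'`, then `Z' = R⁻¹ W' R + ⁅Z, M⁆`. When `Z` is diagonal, so is `Z'`,
while `⁅Z, M⁆ n m = (z n - z m) * M n m`. The diagonal entries of the identity therefore give the
velocities `z n'` and the off-diagonal ones determine `M`, a first-order perturbation formula.
For `W' = -U² + V` this yields (a) and (b).

Differentiating (a) once more requires the diagonal entries of `Y' = R⁻¹ V' R + ⁅Y, M⁆`; only the
off-diagonal entries of `M` enter those of `⁅Y, M⁆`, and inserting (b) produces the interaction sum.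
-/

section NormedAlgebra

variable {𝕜 A : Type*} [NontriviallyNormedField 𝕜] [NormedRing A] [NormedAlgebra 𝕜 A]
  {L R W : 𝕜 → A} {R' W' : A} {t : 𝕜}

theorem hasDerivAt_of_mul_eq_one (hL : ContinuousAt L t) (hLR : ∀ᶠ s in 𝓝 t, L s * R s = 1)
    (hRL : R t * L t = 1) (hR : HasDerivAt R R' t) : HasDerivAt L (-(L t * R' * L t)) t := by
  rw [hasDerivAt_iff_tendsto_slope]
  have hslope : ∀ᶠ s in 𝓝[≠] t, -(L s * slope R t s * L t) = slope L t s := by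
    filter_upwards [hLR.filter_mono nhdsWithin_le_nhds] with s hs
    have hdiff : L s - L t = -(L s * (R s - R t) * L t) := by
      rw [mul_sub, hs, sub_mul, one_mul, mul_assoc, hRL, mul_one, neg_sub]
    rw [slope_def_module, slope_def_module, hdiff, mul_smul_comm, smul_mul_assoc, smul_neg]
  have hLt : Tendsto L (𝓝[≠] t) (𝓝 (L t)) := hL.tendsto.mono_left nhdsWithin_le_nhds
  exact ((hLt.mul hR.tendsto_slope).mul_const (L t)).neg.congr' hslope

theorem hasDerivAt_conj_of_mul_eq_one (hL : ContinuousAt L t)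
    (hLR : ∀ᶠ s in 𝓝 t, L s * R s = 1) (hRL : R t * L t = 1) (hR : HasDerivAt R R' t)
    (hW : HasDerivAt W W' t) :
    HasDerivAt (fun s => L s * W s * R s)
      (L t * W' * R t + ⁅L t * W t * R t, L t * R'⁆) t := by
  have hL' := hasDerivAt_of_mul_eq_one hL hLR hRL hR
  refine ((hL'.fun_mul hW).fun_mul hR).congr_deriv ?_
  have hcancel : L t * W t * R t * (L t * R') = L t * W t * R' := by
    rw [mul_assoc _ (R t), ← mul_assoc (R t), hRL, one_mul]
  rw [Ring.lie_def, hcancel]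
  noncomm_ring

end NormedAlgebra

section MatrixAlgebra

open Matrix

variable {ι K : Type*} [Fintype ι] [DecidableEq ι]

theorem nonsing_inv_conj_mul [CommRing K] {R : Matrix ι ι K} (hR : IsUnit R)
    (A B : Matrix ι ι K) : R⁻¹ * (A * B) * R = R⁻¹ * A * R * (R⁻¹ * B * R) := by
  have hdet := (isUnit_iff_isUnit_det R).1 hR
  simp only [Matrix.mul_assoc, mul_nonsing_inv_cancel_left _ _ hdet]

theorem conj_neg_mul_self_add [CommRing K] {R U : Matrix ι ι K} {z : ι → K} (hR : IsUnit R)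
    (hdiag : R⁻¹ * U * R = diagonal z) (V : Matrix ι ι K) :
    R⁻¹ * (-(U * U) + V) * R = R⁻¹ * V * R - diagonal (fun n => z n ^ 2) := by
  rw [Matrix.mul_add, Matrix.add_mul, Matrix.mul_neg, Matrix.neg_mul, nonsing_inv_conj_mul hR,
    hdiag, diagonal_mul_diagonal, neg_add_eq_sub]
  simp only [pow_two]

theorem conj_neg_mul_add_smul_apply_self [CommRing K] {R U : Matrix ι ι K} {z : ι → K}
    (hR : IsUnit R) (hdiag : R⁻¹ * U * R = diagonal z) (V : Matrix ι ι K) (α β γ : K) (n : ι) :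
    (R⁻¹ * (-(U * V) + α • (1 : Matrix ι ι K) + β • U + γ • V) * R) n n =
      -(z n * (R⁻¹ * V * R) n n) + α + β * z n + γ * (R⁻¹ * V * R) n n := by
  have hconj : R⁻¹ * (-(U * V) + α • (1 : Matrix ι ι K) + β • U + γ • V) * R =
      -(diagonal z * (R⁻¹ * V * R)) + α • (1 : Matrix ι ι K) + β • diagonal z
        + γ • (R⁻¹ * V * R) := by
    rw [← hdiag, ← nonsing_inv_conj_mul hR]
    simp only [Matrix.mul_add, Matrix.add_mul, Matrix.mul_neg, Matrix.neg_mul, Matrix.mul_smul,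
      Matrix.smul_mul, Matrix.mul_one, nonsing_inv_mul _ ((isUnit_iff_isUnit_det R).1 hR)]
  simp [hconj]

theorem diagonal_lie_apply [CommRing K] (z : ι → K) (M : Matrix ι ι K) (n m : ι) :
    ⁅diagonal z, M⁆ n m = (z n - z m) * M n m := by
  rw [Ring.lie_def, Matrix.sub_apply, diagonal_mul, mul_diagonal]
  ring

theorem matrix_lie_apply_self [CommRing K] (Y M : Matrix ι ι K) (n : ι) :
    ⁅Y, M⁆ n n = ∑ ℓ ∈ univ.erase n, (Y n ℓ * M ℓ n - M n ℓ * Y ℓ n) := by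
  rw [Ring.lie_def, Matrix.sub_apply, mul_apply, mul_apply, ← sum_sub_distrib,
    ← add_sum_erase _ _ (mem_univ n), mul_comm (Y n n), sub_self, zero_add]

theorem matrix_lie_apply_self_of_eq_neg_div_sub [Field K] {Y M : Matrix ι ι K} {z : ι → K}
    (hM : ∀ n m, n ≠ m → M n m = -Y n m / (z n - z m)) (n : ι) :
    ⁅Y, M⁆ n n = 2 * ∑ ℓ ∈ univ.erase n, Y n ℓ * Y ℓ n / (z n - z ℓ) := by
  rw [matrix_lie_apply_self, mul_sum]
  refine sum_congr rfl fun ℓ hℓ => ?_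
  have hne : ℓ ≠ n := ne_of_mem_erase hℓ
  rw [hM ℓ n hne, hM n ℓ hne.symm, ← neg_sub (z n) (z ℓ), neg_div_neg_eq]
  ring

theorem eventually_isUnit_matrix [Field K] [TopologicalSpace K] [IsTopologicalRing K] [T1Space K]
    {X : Type*} [TopologicalSpace X] {R : X → Matrix ι ι K} {x : X} (hR : ContinuousAt R x)
    (hu : IsUnit (R x)) : ∀ᶠ y in 𝓝 x, IsUnit (R y) := by
  simp only [isUnit_iff_isUnit_det, isUnit_iff_ne_zero] at hu ⊢
  exact (continuous_id.matrix_det.continuousAt.comp hR).eventually_ne hu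

end MatrixAlgebra

section MovingFrame

open Matrix

variable {ι 𝕜 𝕂 : Type*} [Fintype ι] [DecidableEq ι] [NontriviallyNormedField 𝕜]
  [NormedField 𝕂] [NormedAlgebra 𝕜 𝕂] {t : 𝕜}
  {R W : 𝕜 → Matrix ι ι 𝕂} {R' W' : Matrix ι ι 𝕂} {z : ι → 𝕜 → 𝕂} {z' : ι → 𝕂}

theorem hasDerivAt_nonsing_inv_conj (hu : IsUnit (R t)) (hR : HasDerivAt R R' t)
    (hW : HasDerivAt W W' t) :
    HasDerivAt (fun s => (R s)⁻¹ * W s * R s)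
      ((R t)⁻¹ * W' * R t + ⁅(R t)⁻¹ * W t * R t, (R t)⁻¹ * R'⁆) t := by
  have hinv : ContinuousAt (fun s => (R s)⁻¹) t := by
    have hdet := (isUnit_iff_isUnit_det (R t)).1 hu
    refine (continuousAt_matrix_inv (R t) ?_).comp hR.continuousAt
    simpa only [Ring.inverse_eq_inv'] using continuousAt_inv₀ hdet.ne_zero
  have hleft : ∀ᶠ s in 𝓝 t, (R s)⁻¹ * R s = 1 :=
    (eventually_isUnit_matrix hR.continuousAt hu).mono fun s hs =>
      nonsing_inv_mul _ ((isUnit_iff_isUnit_det (R s)).1 hs)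
  have hright : R t * (R t)⁻¹ = 1 := mul_nonsing_inv _ ((isUnit_iff_isUnit_det (R t)).1 hu)
  -- The product rule needs a submultiplicative norm; this one induces the entrywise topology.
  let _ : NormedRing (Matrix ι ι 𝕂) := Matrix.linftyOpNormedRing
  let _ : NormedAlgebra 𝕜 (Matrix ι ι 𝕂) := Matrix.linftyOpNormedAlgebra
  exact hasDerivAt_conj_of_mul_eq_one hinv hleft hright hR hW

theorem diagonal_deriv_eq_conj_add_lie (hu : IsUnit (R t)) (hR : HasDerivAt R R' t)
    (hW : HasDerivAt W W' t) (hz : ∀ n, HasDerivAt (z n) (z' n) t)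
    (hdiag : ∀ᶠ s in 𝓝 t, (R s)⁻¹ * W s * R s = diagonal fun n => z n s) :
    diagonal z' = (R t)⁻¹ * W' * R t + ⁅diagonal fun n => z n t, (R t)⁻¹ * R'⁆ := by
  have hZ : HasDerivAt (fun s => diagonal fun n => z n s) (diagonal z') t :=
    hasDerivAt_pi.2 fun i => hasDerivAt_pi.2 fun j => by
      obtain rfl | hij := eq_or_ne i j
      · simpa only [diagonal_apply_eq] using hz i
      · simpa only [diagonal_apply_ne _ hij] using hasDerivAt_const t (0 : 𝕂)
  have hconj :=
    (hasDerivAt_nonsing_inv_conj hu hR hW).congr_of_eventuallyEq (EventuallyEq.symm hdiag)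
  rw [hdiag.self_of_nhds] at hconj
  exact hZ.unique hconj

theorem deriv_eigenvalue_eq_conj_apply (hu : IsUnit (R t)) (hR : HasDerivAt R R' t)
    (hW : HasDerivAt W W' t) (hz : ∀ n, HasDerivAt (z n) (z' n) t)
    (hdiag : ∀ᶠ s in 𝓝 t, (R s)⁻¹ * W s * R s = diagonal fun n => z n s) (n : ι) :
    z' n = ((R t)⁻¹ * W' * R t) n n := by
  have h := congr_fun₂ (diagonal_deriv_eq_conj_add_lie hu hR hW hz hdiag) n n
  rwa [diagonal_apply_eq, Matrix.add_apply, diagonal_lie_apply, sub_self, zero_mul,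
    add_zero] at h

theorem inv_mul_deriv_apply_eq_neg_conj_div_sub (hu : IsUnit (R t)) (hR : HasDerivAt R R' t)
    (hW : HasDerivAt W W' t) (hz : ∀ n, HasDerivAt (z n) (z' n) t)
    (hdiag : ∀ᶠ s in 𝓝 t, (R s)⁻¹ * W s * R s = diagonal fun n => z n s) {n m : ι}
    (hnm : z n t ≠ z m t) :
    ((R t)⁻¹ * R') n m = -((R t)⁻¹ * W' * R t) n m / (z n t - z m t) := by
  have hne : n ≠ m := fun h => hnm (h ▸ rfl)
  have h := congr_fun₂ (diagonal_deriv_eq_conj_add_lie hu hR hW hz hdiag) n m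
  rw [diagonal_apply_ne _ hne, Matrix.add_apply, diagonal_lie_apply] at h
  rw [eq_div_iff (sub_ne_zero.2 hnm)]
  linear_combination -h

end MovingFrame

section Goldfish

variable {ι 𝕜 𝕂 : Type*} [Fintype ι] [DecidableEq ι] [NontriviallyNormedField 𝕜]
  [NormedField 𝕂] [NormedAlgebra 𝕜 𝕂] {t : 𝕜} {α β γ : 𝕂}
  {U V R Y : 𝕜 → Matrix ι ι 𝕂} {R' M : Matrix ι ι 𝕂} {z : ι → 𝕜 → 𝕂}

theorem diag_conj_eq_deriv_add_sq {z' : ι → 𝕂}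
    (hU : HasDerivAt U (-(U t * U t) + V t) t) (hR : HasDerivAt R R' t) (hu : IsUnit (R t))
    (hz : ∀ n, HasDerivAt (z n) (z' n) t)
    (hdiag : ∀ᶠ s in 𝓝 t, (R s)⁻¹ * U s * R s = Matrix.diagonal fun n => z n s)
    (hY : Y t = (R t)⁻¹ * V t * R t) (n : ι) : Y t n n = z' n + z n t ^ 2 := by
  rw [deriv_eigenvalue_eq_conj_apply hu hR hU hz hdiag n,
    conj_neg_mul_self_add hu hdiag.self_of_nhds, ← hY]
  simp

theorem inv_mul_deriv_apply_eq_neg_div_sub {z' : ι → 𝕂}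
    (hU : HasDerivAt U (-(U t * U t) + V t) t) (hR : HasDerivAt R R' t) (hu : IsUnit (R t))
    (hz : ∀ n, HasDerivAt (z n) (z' n) t)
    (hdiag : ∀ᶠ s in 𝓝 t, (R s)⁻¹ * U s * R s = Matrix.diagonal fun n => z n s)
    (hY : Y t = (R t)⁻¹ * V t * R t) {n m : ι} (hnm : z n t ≠ z m t) :
    ((R t)⁻¹ * R') n m = -Y t n m / (z n t - z m t) := by
  have hne : n ≠ m := fun h => hnm (h ▸ rfl)
  rw [inv_mul_deriv_apply_eq_neg_conj_div_sub hu hR hU hz hdiag hnm,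
    conj_neg_mul_self_add hu hdiag.self_of_nhds, ← hY, Matrix.sub_apply,
    Matrix.diagonal_apply_ne _ hne, sub_zero]

theorem hasDerivAt_diag_conj (hV : HasDerivAt V
      (-(U t * V t) + α • (1 : Matrix ι ι 𝕂) + β • U t + γ • V t) t)
    (hR : HasDerivAt R R' t) (hu : IsUnit (R t))
    (hdiag : (R t)⁻¹ * U t * R t = Matrix.diagonal fun n => z n t)
    (hY : ∀ᶠ s in 𝓝 t, Y s = (R s)⁻¹ * V s * R s)
    (hM : ∀ n m, n ≠ m → ((R t)⁻¹ * R') n m = -Y t n m / (z n t - z m t)) (n : ι) :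
    HasDerivAt (fun s => Y s n n)
      (-(z n t * Y t n n) + α + β * z n t + γ * Y t n n
        + 2 * ∑ ℓ ∈ univ.erase n, Y t n ℓ * Y t ℓ n / (z n t - z ℓ t)) t := by
  have hYt := hY.self_of_nhds
  have hY' := (hasDerivAt_nonsing_inv_conj hu hR hV).congr_of_eventuallyEq hY
  have hYnn := hasDerivAt_pi.1 (hasDerivAt_pi.1 hY' n) n
  rwa [Matrix.add_apply, conj_neg_mul_add_smul_apply_self hu hdiag, ← hYt,
    matrix_lie_apply_self_of_eq_neg_div_sub hM] at hYnn

theorem goldfish_stmt9_general {Rd : 𝕜 → Matrix ι ι 𝕂} {zd : ι → 𝕜 → 𝕂}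
    (hU : ∀ᶠ s in 𝓝 t, HasDerivAt U (-(U s * U s) + V s) s)
    (hV : HasDerivAt V (-(U t * V t) + α • (1 : Matrix ι ι 𝕂) + β • U t + γ • V t) t)
    (hR : ∀ᶠ s in 𝓝 t, HasDerivAt R (Rd s) s) (hu : IsUnit (R t))
    (hz : ∀ᶠ s in 𝓝 t, ∀ n, HasDerivAt (z n) (zd n s) s)
    (hsep : ∀ n m, n ≠ m → z n t ≠ z m t)
    (hdiag : ∀ᶠ s in 𝓝 t, (R s)⁻¹ * U s * R s = Matrix.diagonal fun n => z n s)
    (hY : ∀ᶠ s in 𝓝 t, Y s = (R s)⁻¹ * V s * R s) (hM : M = (R t)⁻¹ * Rd t) :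
    (∀ n, Y t n n = zd n t + z n t ^ 2) ∧
    (∀ n m, n ≠ m → M n m = -(Y t n m) / (z n t - z m t)) ∧
    (∀ n, HasDerivAt (zd n)
      (-3 * zd n t * z n t + γ * zd n t - z n t ^ 3 + γ * z n t ^ 2 + β * z n t + α
        + 2 * ∑ ℓ ∈ univ.erase n, Y t n ℓ * Y t ℓ n / (z n t - z ℓ t)) t) := by
  subst hM
  have hRt := hR.self_of_nhds
  have hzt := hz.self_of_nhds
  have hvel : ∀ᶠ s in 𝓝 t, ∀ n, Y s n n = zd n s + z n s ^ 2 := by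
    filter_upwards [hU, hR, eventually_isUnit_matrix hRt.continuousAt hu, hz,
      hdiag.eventually_nhds, hY] with s hUs hRs hus hzs hdiag_s hYs
    exact diag_conj_eq_deriv_add_sq hUs hRs hus hzs hdiag_s hYs
  have hoff : ∀ n m, n ≠ m → ((R t)⁻¹ * Rd t) n m = -(Y t n m) / (z n t - z m t) :=
    fun n m hnm => inv_mul_deriv_apply_eq_neg_div_sub hU.self_of_nhds hRt hu hzt hdiag
      hY.self_of_nhds (hsep n m hnm)
  refine ⟨hvel.self_of_nhds, hoff, fun n => ?_⟩
  have hzd_eq : zd n =ᶠ[𝓝 t] fun s => Y s n n - z n s ^ 2 :=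
    hvel.mono fun s hs => eq_sub_of_add_eq (hs n).symm
  have hacc := (hasDerivAt_diag_conj hV hRt hu hdiag.self_of_nhds hY hoff n).sub ((hzt n).fun_pow 2)
  refine (hacc.congr_of_eventuallyEq hzd_eq).congr_deriv ?_
  rw [hvel.self_of_nhds n]
  push_cast
  ring

end Goldfish

/-- If `U, V` satisfy the matrix system (EqUV), `R` is differentiable and
everywhere invertible, and `Z = R⁻¹UR = diag(z₁,…,z_N)` with pairwise distinct
differentiable eigenvalues, then with `Y = R⁻¹VR` and `M̂ = R⁻¹R'`:
(a) `Y_{nn} = z_n' + z_n²`; (b) `M̂_{nm} = −Y_{nm}/(z_n − z_m)` for `n ≠ m`; and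
(c) each `z_n` is twice differentiable and satisfies
`z_n'' = −3z_n'z_n + γz_n' − z_n³ + γz_n² + βz_n + α + 2Σ_{ℓ≠n} Y_{nℓ}Y_{ℓn}/(z_n − z_ℓ)`. -/
theorem goldfish_stmt9 (N : ℕ) (hN : 0 < N) (α β γ : ℂ)
    (U V R Rd : ℝ → Matrix (Fin N) (Fin N) ℂ)
    (hU : ∀ t : ℝ, HasDerivAt U (-(U t * U t) + V t) t)
    (hV : ∀ t : ℝ, HasDerivAt V
      (-(U t * V t) + α • (1 : Matrix (Fin N) (Fin N) ℂ) + β • U t + γ • V t) t)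
    (hR : ∀ t : ℝ, HasDerivAt R (Rd t) t)
    (hRu : ∀ t : ℝ, IsUnit (R t))
    (z zd : Fin N → ℝ → ℂ)
    (hz : ∀ n, ∀ t : ℝ, HasDerivAt (z n) (zd n t) t)
    (hsep : ∀ t : ℝ, ∀ n m : Fin N, n ≠ m → z n t ≠ z m t)
    (hdiag : ∀ t : ℝ, (R t)⁻¹ * U t * R t = Matrix.diagonal (fun n => z n t))
    (Y Mh : ℝ → Matrix (Fin N) (Fin N) ℂ)
    (hY : ∀ t : ℝ, Y t = (R t)⁻¹ * V t * R t)
    (hM : ∀ t : ℝ, Mh t = (R t)⁻¹ * Rd t) :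
    (∀ t : ℝ, ∀ n : Fin N, Y t n n = zd n t + (z n t) ^ 2) ∧
    (∀ t : ℝ, ∀ n m : Fin N, n ≠ m → Mh t n m = -(Y t n m) / (z n t - z m t)) ∧
    (∀ n : Fin N, ∀ t : ℝ, HasDerivAt (zd n)
      (-3 * zd n t * z n t + γ * zd n t - (z n t) ^ 3 + γ * (z n t) ^ 2
        + β * z n t + α
        + 2 * ∑ ℓ ∈ Finset.univ.erase n, Y t n ℓ * Y t ℓ n / (z n t - z ℓ t)) t) := by
  have local_goldfish := fun t => goldfish_stmt9_general (.of_forall hU) (hV t) (.of_forall hR)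
    (hRu t) (.of_forall fun s n => hz n s) (hsep t) (.of_forall hdiag) (.of_forall hY) (hM t)
  exact ⟨fun t => (local_goldfish t).1, fun t => (local_goldfish t).2.1,
    fun n t => (local_goldfish t).2.2 n⟩
end

section
/- Let a, b, c, α, β, γ be complex numbers satisfying the four constraints (2c − 3)·c = −1, γ·c + 3b·(c − 1) = γ, a·(2c − 3) + b·(γ + b) = β, a·(γ + b) = α, and set f(z) = a + b·z + c·z². Let z₁,…,z_N : ℝ → ℂ be twice differentiable with z_n(t) pairwise distinct for every t, satisfying for all n and t the Newtonian equations z_n'' = −3·z_n'·z_n + γ·z_n' − z_n³ + γ·z_n² + β·z_n + α + Σ_{ℓ≠n} 2·(z_n' + f(z_n))·(z_ℓ' + f(z_ℓ))/(z_n − z_ℓ). Let v₁,…,v_N : ℝ → ℂ be differentiable, nowhere vanishing, with v_n(t)² = z_n'(t) + f(z_n(t)) for all t. Define y_n = z_n' + z_n², μ_n = −z_n/2, and, for j ≠ k, Y_{jk} = v_j·v_k and M̂_{jk} = −v_j·v_k/(z_j − z_k). Then for all n ≠ m and all t the off-diagonal evolution equations hold: (d/dt)(v_n·v_m) = −(z_n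 − γ)·v_n·v_m − (μ_n − μ_m)·v_n·v_m + (y_n − y_m)·M̂_{nm} + Σ_{ℓ≠n,m} (Y_{nℓ}·M̂_{ℓm} − M̂_{nℓ}·Y_{ℓm}). -/
open Finset

/-!
Write `w_n = z_n' + f(z_n)`. The four constraints say exactly that adding `f'(z_n) z_n'` to the
one-body force makes it divisible by `w_n`, so that the Newtonian equations become
`w_n' / w_n = (γ + b) + (2c - 3) z_n + 2 ∑_{ℓ ≠ n} w_ℓ / (z_n - z_ℓ)`. Since `v_n² = w_n`, the
logarithmic derivative of `v_n` is half of this, and that of `v_n v_m` is the sum of two such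
halves. The terms with `ℓ ≠ n, m` give the commutator sum. The mutual interaction of `n` and `m`
is minus the divided difference of `w`, in which `f` contributes `-b - c (z_n + z_m)`; this cancels
`b` and `c` from the one-body parts.
-/

namespace Goldfish

section Algebra

variable {ι K : Type*} [Fintype ι] [DecidableEq ι] [Field K]

theorem force_add_deriv_eq_mul {R : Type*} [CommRing R] {a b c α β γ : R}
    (hc1 : (2 * c - 3) * c = -1)
    (hc2 : γ * c + 3 * b * (c - 1) = γ)
    (hc3 : a * (2 * c - 3) + b * (γ + b) = β)
    (hc4 : a * (γ + b) = α) (x p : R) :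
    -3 * p * x + γ * p - x ^ 3 + γ * x ^ 2 + β * x + α + (b * p + c * (2 * x * p)) =
      (p + (a + b * x + c * x ^ 2)) * (γ + b + (2 * c - 3) * x) := by
  linear_combination -x ^ 3 * hc1 - x ^ 2 * hc2 - x * hc3 - hc4

/-- The sum `∑_{ℓ ≠ n} w_ℓ / (x_n - x_ℓ)`: up to the factor `2 w_n`, the two-body force exerted on
particle `n` by particles at the positions `x_ℓ` with weights `w_ℓ`. -/
def interaction (x w : ι → K) (n : ι) : K :=
  ∑ ℓ ∈ univ.erase n, w ℓ / (x n - x ℓ)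

theorem sum_two_mul_mul_div_eq_interaction (x w : ι → K) (n : ι) :
    ∑ ℓ ∈ univ.erase n, 2 * w n * w ℓ / (x n - x ℓ) = 2 * w n * interaction x w n := by
  simp only [interaction, mul_sum, mul_div_assoc]

theorem interaction_add_interaction (x w : ι → K) {n m : ι} (hnm : n ≠ m) :
    interaction x w n + interaction x w m = -((w n - w m) / (x n - x m)) +
      ∑ ℓ ∈ (univ.erase n).erase m, (w ℓ / (x n - x ℓ) + w ℓ / (x m - x ℓ)) := by
  have hn : interaction x w n =
      w m / (x n - x m) + ∑ ℓ ∈ (univ.erase n).erase m, w ℓ / (x n - x ℓ) :=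
    (add_sum_erase _ _ (mem_erase.mpr ⟨hnm.symm, mem_univ m⟩)).symm
  have hm : interaction x w m =
      w n / (x m - x n) + ∑ ℓ ∈ (univ.erase n).erase m, w ℓ / (x m - x ℓ) := by
    rw [erase_right_comm]
    exact (add_sum_erase _ _ (mem_erase.mpr ⟨hnm, mem_univ n⟩)).symm
  rw [hn, hm, sum_add_distrib, ← neg_sub (x n) (x m), div_neg]
  ring

theorem divided_difference_add_quadratic (a b c p q : K) {x y : K} (hxy : x ≠ y) :
    (p + (a + b * x + c * x ^ 2) - (q + (a + b * y + c * y ^ 2))) / (x - y) =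
      (p - q) / (x - y) + b + c * (x + y) := by
  have := sub_ne_zero.mpr hxy
  field_simp
  ring

theorem commutator_term_eq (u v r x y s : K) :
    u * r * (-(r * v) / (s - y)) - -(u * r) / (x - s) * (r * v) =
      u * v * (r ^ 2 / (x - s) + r ^ 2 / (y - s)) := by
  rw [← neg_sub y s, neg_div_neg_eq]
  ring

end Algebra

section Derivatives

variable {𝕜 K : Type*} [NontriviallyNormedField 𝕜] [NormedField K] [NormedAlgebra 𝕜 K] {t : 𝕜}

theorem hasDerivAt_velocity_add_quadratic {a b c α β γ : K}
    (hc1 : (2 * c - 3) * c = -1)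
    (hc2 : γ * c + 3 * b * (c - 1) = γ)
    (hc3 : a * (2 * c - 3) + b * (γ + b) = β)
    (hc4 : a * (γ + b) = α) {x p : 𝕜 → K} {p' S : K}
    (hx : HasDerivAt x (p t) t) (hp : HasDerivAt p p' t)
    (hNewton : p' = -3 * p t * x t + γ * p t - x t ^ 3 + γ * x t ^ 2 + β * x t + α +
      2 * (p t + (a + b * x t + c * x t ^ 2)) * S) :
    HasDerivAt (fun s => p s + (a + b * x s + c * x s ^ 2))
      ((p t + (a + b * x t + c * x t ^ 2)) * (γ + b + (2 * c - 3) * x t + 2 * S)) t := by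
  have hsq : HasDerivAt (fun s => x s ^ 2) (2 * x t * p t) t := by simpa using hx.fun_pow 2
  refine (hp.add (((hx.const_mul b).const_add a).add (hsq.const_mul c))).congr_deriv ?_
  linear_combination hNewton + force_add_deriv_eq_mul hc1 hc2 hc3 hc4 (x t) (p t)

theorem hasDerivAt_of_sq_eventuallyEq [NeZero (2 : K)] {v w : 𝕜 → K} {g : K}
    (hv : DifferentiableAt 𝕜 v t) (hv0 : v t ≠ 0) (hvw : (fun s => v s ^ 2) =ᶠ[nhds t] w)
    (hw : HasDerivAt w (w t * g) t) : HasDerivAt v (v t * (g / 2)) t := by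
  have hderiv : 2 * v t * deriv v t = v t ^ 2 * g := by
    rw [show v t ^ 2 = w t from hvw.eq_of_nhds]
    have hsq : HasDerivAt (fun s => v s ^ 2) (2 * v t * deriv v t) t := by
      simpa using hv.hasDerivAt.fun_pow 2
    exact hsq.unique (hw.congr_of_eventuallyEq hvw)
  refine hv.hasDerivAt.congr_deriv (mul_left_cancel₀ (mul_ne_zero two_ne_zero hv0) ?_)
  rw [hderiv]
  field_simp

end Derivatives

end Goldfish

open Goldfish in
theorem goldfish_stmt11_general {𝕜 K ι : Type*} [NontriviallyNormedField 𝕜] [NormedField K]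
    [NormedAlgebra 𝕜 K] [NeZero (2 : K)] [Fintype ι] [DecidableEq ι] {a b c α β γ : K}
    (hc1 : (2 * c - 3) * c = -1)
    (hc2 : γ * c + 3 * b * (c - 1) = γ)
    (hc3 : a * (2 * c - 3) + b * (γ + b) = β)
    (hc4 : a * (γ + b) = α)
    {t : 𝕜} {z zd v : ι → 𝕜 → K} {zdd : ι → K}
    (hz : ∀ n, HasDerivAt (z n) (zd n t) t)
    (hzd : ∀ n, HasDerivAt (zd n) (zdd n) t)
    (hsep : ∀ n m, n ≠ m → z n t ≠ z m t)
    (hNewton : ∀ n, zdd n =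
      -3 * zd n t * z n t + γ * zd n t - (z n t) ^ 3 + γ * (z n t) ^ 2 + β * z n t + α
        + ∑ ℓ ∈ univ.erase n,
            2 * (zd n t + (a + b * z n t + c * (z n t) ^ 2))
              * (zd ℓ t + (a + b * z ℓ t + c * (z ℓ t) ^ 2)) / (z n t - z ℓ t))
    (hv : ∀ n, DifferentiableAt 𝕜 (v n) t)
    (hv0 : ∀ n, v n t ≠ 0)
    (hv2 : ∀ n, ∀ᶠ s in nhds t, (v n s) ^ 2 = zd n s + (a + b * z n s + c * (z n s) ^ 2))
    {n m : ι} (hnm : n ≠ m) :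
    HasDerivAt (fun s => v n s * v m s)
      (-(z n t - γ) * (v n t * v m t)
        - ((-(z n t) / 2) - (-(z m t) / 2)) * (v n t * v m t)
        + ((zd n t + (z n t) ^ 2) - (zd m t + (z m t) ^ 2))
          * (-(v n t * v m t) / (z n t - z m t))
        + ∑ ℓ ∈ (univ.erase n).erase m,
            ((v n t * v ℓ t) * (-(v ℓ t * v m t) / (z ℓ t - z m t))
              - (-(v n t * v ℓ t) / (z n t - z ℓ t)) * (v ℓ t * v m t))) t := by
  let x ℓ := z ℓ t
  let w ℓ := zd ℓ t + (a + b * x ℓ + c * x ℓ ^ 2)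
  have hv' (k : ι) : HasDerivAt (v k)
      (v k t * ((γ + b + (2 * c - 3) * x k + 2 * interaction x w k) / 2)) t :=
    hasDerivAt_of_sq_eventuallyEq (hv k) (hv0 k) (hv2 k) <|
      hasDerivAt_velocity_add_quadratic hc1 hc2 hc3 hc4 (hz k) (hzd k) <|
        sum_two_mul_mul_div_eq_interaction x w k ▸ hNewton k
  have hw (ℓ : ι) : v ℓ t ^ 2 = w ℓ := (hv2 ℓ).self_of_nhds
  have hmutual : (w n - w m) / (x n - x m) =
      (zd n t - zd m t) / (x n - x m) + b + c * (x n + x m) :=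
    divided_difference_add_quadratic a b c _ _ (hsep n m hnm)
  have hy : (zd n t + x n ^ 2 - (zd m t + x m ^ 2)) / (x n - x m) =
      (zd n t - zd m t) / (x n - x m) + (x n + x m) := by
    simpa using divided_difference_add_quadratic 0 0 1 (zd n t) (zd m t) (hsep n m hnm)
  have hprod : HasDerivAt (fun s => v n s * v m s)
      (v n t * v m t * (-(x n - γ) - (-x n / 2 - -x m / 2) + b + (c - 1) * (x n + x m) +
        (interaction x w n + interaction x w m))) t := by
    refine ((hv' n).mul (hv' m)).congr_deriv ?_
    have h2 : (2 : K) ≠ 0 := two_ne_zero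
    field_simp
    ring
  refine hprod.congr_deriv ?_
  simp only [commutator_term_eq, ← mul_sum, hw]
  linear_combination v n t * v m t * (interaction_add_interaction x w hnm - hmutual + hy)

/-- Under the four constraints on `a, b, c, α, β, γ`, with `f(z) = a+bz+cz²`,
if `z₁,…,z_N` (pairwise distinct, twice differentiable) satisfy the Newtonian equations and
`v_n` are differentiable, nowhere vanishing, with `v_n² = z_n' + f(z_n)`, then setting
`y_n = z_n' + z_n²`, `μ_n = −z_n/2`, `Y_{jk} = v_j v_k`, `M̂_{jk} = −v_j v_k/(z_j − z_k)`
(for `j ≠ k`), the off-diagonal evolution equations hold: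
`(v_n v_m)' = −(z_n−γ)v_n v_m − (μ_n−μ_m)v_n v_m + (y_n−y_m)M̂_{nm}
  + Σ_{ℓ≠n,m}(Y_{nℓ}M̂_{ℓm} − M̂_{nℓ}Y_{ℓm})`. -/
theorem goldfish_stmt11 (N : ℕ) (hN : 0 < N) (a b c α β γ : ℂ)
    (hc1 : (2 * c - 3) * c = -1)
    (hc2 : γ * c + 3 * b * (c - 1) = γ)
    (hc3 : a * (2 * c - 3) + b * (γ + b) = β)
    (hc4 : a * (γ + b) = α)
    (z zd zdd : Fin N → ℝ → ℂ)
    (hz : ∀ n, ∀ t : ℝ, HasDerivAt (z n) (zd n t) t)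
    (hzd : ∀ n, ∀ t : ℝ, HasDerivAt (zd n) (zdd n t) t)
    (hsep : ∀ t : ℝ, ∀ n m : Fin N, n ≠ m → z n t ≠ z m t)
    (hNewton : ∀ n, ∀ t : ℝ, zdd n t =
      -3 * zd n t * z n t + γ * zd n t - (z n t) ^ 3 + γ * (z n t) ^ 2
        + β * z n t + α
        + ∑ ℓ ∈ Finset.univ.erase n,
            2 * (zd n t + (a + b * z n t + c * (z n t) ^ 2))
              * (zd ℓ t + (a + b * z ℓ t + c * (z ℓ t) ^ 2)) / (z n t - z ℓ t))
    (v vd : Fin N → ℝ → ℂ)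
    (hv : ∀ n, ∀ t : ℝ, HasDerivAt (v n) (vd n t) t)
    (hv0 : ∀ n, ∀ t : ℝ, v n t ≠ 0)
    (hv2 : ∀ n, ∀ t : ℝ, (v n t) ^ 2 = zd n t + (a + b * z n t + c * (z n t) ^ 2)) :
    ∀ t : ℝ, ∀ n m : Fin N, n ≠ m →
      HasDerivAt (fun s => v n s * v m s)
        (-(z n t - γ) * (v n t * v m t)
          - ((-(z n t) / 2) - (-(z m t) / 2)) * (v n t * v m t)
          + ((zd n t + (z n t) ^ 2) - (zd m t + (z m t) ^ 2))
            * (-(v n t * v m t) / (z n t - z m t))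
          + ∑ ℓ ∈ (Finset.univ.erase n).erase m,
              ((v n t * v ℓ t) * (-(v ℓ t * v m t) / (z ℓ t - z m t))
                - (-(v n t * v ℓ t) / (z n t - z ℓ t)) * (v ℓ t * v m t))) t := by
  intro t n m hnm
  exact goldfish_stmt11_general hc1 hc2 hc3 hc4 (hz · t) (hzd · t) (hsep t) (hNewton · t)
    (fun k => (hv k t).differentiableAt) (hv0 · t) (fun k => .of_forall (hv2 k)) hnm
end

section
/- Let c be a complex number, ω a nonzero real number, and τ(t) = (exp(iωt) − 1)/(iω). Let Ω ⊆ ℂ be an open set containing {τ(t) : t ∈ ℝ} and let ζ₁,…,ζ_N : Ω → ℂ be twice complex-differentiable with ζ_n(τ(t)) pairwise distinct for every real t, satisfying on Ω the equations ζ_n'' = −3·ζ_n'·ζ_n − ζ_n³ + Σ_{ℓ≠n} 2·(ζ_n' + c·ζ_ℓ·0 + c·ζ_n²)·(ζ_ℓ' + c·ζ_ℓ²)/(ζ_n − ζ_ℓ), i.e. ζ_n'' = −3·ζ_n'·ζ_n − ζ_n³ + Σ_{ℓ≠n} 2·(ζ_n' + c·ζ_n²)·(ζ_ℓ' + c·ζ_ℓ²)/(ζ_n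 − ζ_ℓ), where primes denote complex derivatives. Define z̃_n(t) = exp(iωt)·ζ_n(τ(t)) for real t. Then each z̃_n is twice differentiable in t and satisfies for all n and t: z̃_n'' = 3iω·z̃_n' + 2ω²·z̃_n − 3·z̃_n'·z̃_n + 3iω·z̃_n² − z̃_n³ + Σ_{ℓ≠n} 2·(z̃_n' − iω·z̃_n + c·z̃_n²)·(z̃_ℓ' − iω·z̃_ℓ + c·z̃_ℓ²)/(z̃_n − z̃_ℓ), where now primes denote derivatives with respect to the real time t. -/
/-!
Write `E = e^{λt}` with `λ = iω`, so that `E' = λE` and `τ' = E`. Then `z̃ = E ζ(τ)` satisfies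
`z̃' - λz̃ = E² ζ'(τ)` and `z̃'' = 3λz̃' - 2λ²z̃ + E³ ζ''(τ)`. The goldfish force is homogeneous of
weight `3` when positions have weight `1` and velocities weight `2`, so it absorbs the factor `E³`:
`E³ ζ''(τ)` is the force at position `z̃` and velocity `z̃' - λz̃`.
-/

open Finset

section HomogeneousForce

variable {𝕜 𝕜' V : Type*} [NontriviallyNormedField 𝕜] [NontriviallyNormedField 𝕜']
  [NormedAlgebra 𝕜 𝕜'] [NormedAddCommGroup V] [NormedSpace 𝕜 V] [NormedSpace 𝕜' V]
  [IsScalarTower 𝕜 𝕜' V]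
  {E τ : 𝕜 → 𝕜'} {ζ ζd : 𝕜' → V} {lam : 𝕜'} {t : 𝕜}

theorem hasDerivAt_smul_comp_of_deriv_eq_mul {ζ' : V} (hE : HasDerivAt E (lam * E t) t)
    (hτ : HasDerivAt τ (E t) t) (hζ : HasDerivAt ζ ζ' (τ t)) :
    HasDerivAt (fun s => E s • ζ (τ s)) (lam • E t • ζ (τ t) + E t ^ 2 • ζ') t := by
  refine (hE.fun_smul (hζ.scomp t hτ)).congr_deriv ?_
  simp only [Function.comp_apply]
  module

theorem hasDerivAt_velocity_of_deriv_eq_mul {ζ'' : V} (hE : HasDerivAt E (lam * E t) t)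
    (hτ : HasDerivAt τ (E t) t) (hζ : HasDerivAt ζ (ζd (τ t)) (τ t))
    (hζd : HasDerivAt ζd ζ'' (τ t)) :
    HasDerivAt (fun s => lam • E s • ζ (τ s) + E s ^ 2 • ζd (τ s))
      ((3 * lam) • (lam • E t • ζ (τ t) + E t ^ 2 • ζd (τ t))
        - (2 * lam ^ 2) • E t • ζ (τ t) + E t ^ 3 • ζ'') t := by
  have hposition := hasDerivAt_smul_comp_of_deriv_eq_mul hE hτ hζ
  refine ((hposition.fun_const_smul lam).fun_add
    ((hE.fun_pow 2).fun_smul (hζd.scomp t hτ))).congr_deriv ?_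
  simp only [Function.comp_apply]
  module

theorem hasDerivAt_velocity_of_homogeneous_force {F : V → V → V}
    (hF : ∀ a : 𝕜', a ≠ 0 → ∀ z v, F (a • z) (a ^ 2 • v) = a ^ 3 • F z v)
    (hE : HasDerivAt E (lam * E t) t) (hτ : HasDerivAt τ (E t) t) (hE₀ : E t ≠ 0)
    (hζ : HasDerivAt ζ (ζd (τ t)) (τ t))
    (hζd : HasDerivAt ζd (F (ζ (τ t)) (ζd (τ t))) (τ t)) :
    HasDerivAt (fun s => lam • E s • ζ (τ s) + E s ^ 2 • ζd (τ s))
      ((3 * lam) • (lam • E t • ζ (τ t) + E t ^ 2 • ζd (τ t))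
        - (2 * lam ^ 2) • E t • ζ (τ t) + F (E t • ζ (τ t)) (E t ^ 2 • ζd (τ t))) t := by
  rw [hF _ hE₀]
  exact hasDerivAt_velocity_of_deriv_eq_mul hE hτ hζ hζd

end HomogeneousForce

section GoldfishForce

variable {ι K : Type*} [Fintype ι] [DecidableEq ι] [Field K]

/-- The acceleration field of the goldfish system `ζ'' = F(ζ, ζ')` with coupling constant `c`, as a
function of the positions `z` and the velocities `v`. At a collision `z n = z ℓ` the corresponding
summand is `0`. -/
def goldfishForce (c : K) (z v : ι → K) (n : ι) : K :=
  -3 * v n * z n - z n ^ 3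
    + ∑ ℓ ∈ univ.erase n, 2 * (v n + c * z n ^ 2) * (v ℓ + c * z ℓ ^ 2) / (z n - z ℓ)

theorem goldfishForce_smul (c : K) {a : K} (ha : a ≠ 0) (z v : ι → K) :
    goldfishForce c (a • z) (a ^ 2 • v) = a ^ 3 • goldfishForce c z v := by
  ext n
  simp only [goldfishForce, Pi.smul_apply, smul_eq_mul]
  rw [mul_add (a ^ 3), mul_sum]
  congr 1
  · ring
  · refine sum_congr rfl fun ℓ _ => ?_
    calc 2 * (a ^ 2 * v n + c * (a * z n) ^ 2) * (a ^ 2 * v ℓ + c * (a * z ℓ) ^ 2)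
          / (a * z n - a * z ℓ)
        = a * (a ^ 3 * (2 * (v n + c * z n ^ 2) * (v ℓ + c * z ℓ ^ 2)))
          / (a * (z n - z ℓ)) := by ring
      _ = a ^ 3 * (2 * (v n + c * z n ^ 2) * (v ℓ + c * z ℓ ^ 2) / (z n - z ℓ)) := by
        rw [mul_div_mul_left _ _ ha, mul_div_assoc]

variable {𝕜 𝕜' : Type*} [NontriviallyNormedField 𝕜] [NontriviallyNormedField 𝕜']
  [NormedAlgebra 𝕜 𝕜'] {E τ : 𝕜 → 𝕜'} {ζ ζd : ι → 𝕜' → 𝕜'} {c lam : 𝕜'} {t : 𝕜}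

theorem hasDerivAt_goldfish_velocity (hE : HasDerivAt E (lam * E t) t)
    (hτ : HasDerivAt τ (E t) t) (hE₀ : E t ≠ 0) (hζ : ∀ n, HasDerivAt (ζ n) (ζd n (τ t)) (τ t))
    (hζd : ∀ n, HasDerivAt (ζd n) (goldfishForce c (ζ · (τ t)) (ζd · (τ t)) n) (τ t)) (n : ι) :
    HasDerivAt (fun s => lam * (E s * ζ n (τ s)) + E s ^ 2 * ζd n (τ s))
      (3 * lam * (lam * (E t * ζ n (τ t)) + E t ^ 2 * ζd n (τ t))
        - 2 * lam ^ 2 * (E t * ζ n (τ t))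
        + goldfishForce c (fun ℓ => E t * ζ ℓ (τ t)) (fun ℓ => E t ^ 2 * ζd ℓ (τ t)) n) t :=
  hasDerivAt_pi.1 (hasDerivAt_velocity_of_homogeneous_force (ζ := fun w ℓ => ζ ℓ w)
    (ζd := fun w ℓ => ζd ℓ w) (fun _ ha => goldfishForce_smul c ha) hE hτ hE₀
    (hasDerivAt_pi.2 hζ) (hasDerivAt_pi.2 hζd)) n

end GoldfishForce

theorem hasDerivAt_cexp_mul_ofReal (lam : ℂ) (t : ℝ) :
    HasDerivAt (fun s : ℝ => Complex.exp (lam * s)) (lam * Complex.exp (lam * t)) t := by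
  simpa [mul_comm] using ((hasDerivAt_id (t : ℂ)).const_mul lam).cexp.comp_ofReal

theorem hasDerivAt_cexp_mul_ofReal_sub_one_div {lam : ℂ} (hlam : lam ≠ 0) (t : ℝ) :
    HasDerivAt (fun s : ℝ => (Complex.exp (lam * s) - 1) / lam) (Complex.exp (lam * t)) t := by
  simpa only [mul_div_cancel_left₀ _ hlam] using
    ((hasDerivAt_cexp_mul_ofReal lam t).sub_const 1).div_const lam

theorem goldfish_stmt15_general {ι : Type*} [Fintype ι] [DecidableEq ι] (c : ℂ) {ω : ℂ}
    (hω : ω ≠ 0) (τ : ℝ → ℂ)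
    (hτ : ∀ t : ℝ, τ t = (Complex.exp (Complex.I * ω * t) - 1) / (Complex.I * ω))
    (ζ ζd ζdd : ι → ℂ → ℂ)
    (hζ : ∀ n t, HasDerivAt (ζ n) (ζd n (τ t)) (τ t))
    (hζd : ∀ n t, HasDerivAt (ζd n) (ζdd n (τ t)) (τ t))
    (_hsep : ∀ (t : ℝ) (n m : ι), n ≠ m → ζ n (τ t) ≠ ζ m (τ t))
    (hEq : ∀ n t, ζdd n (τ t) =
      -3 * ζd n (τ t) * ζ n (τ t) - ζ n (τ t) ^ 3
        + ∑ ℓ ∈ univ.erase n,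
            2 * (ζd n (τ t) + c * ζ n (τ t) ^ 2) * (ζd ℓ (τ t) + c * ζ ℓ (τ t) ^ 2)
              / (ζ n (τ t) - ζ ℓ (τ t)))
    (zt : ι → ℝ → ℂ)
    (hzt : ∀ n (t : ℝ), zt n t = Complex.exp (Complex.I * ω * t) * ζ n (τ t)) :
    ∃ ztd : ι → ℝ → ℂ,
      (∀ n t, HasDerivAt (zt n) (ztd n t) t) ∧
      (∀ n t, HasDerivAt (ztd n)
        (3 * Complex.I * ω * ztd n t + 2 * ω ^ 2 * zt n t
          - 3 * ztd n t * zt n t + 3 * Complex.I * ω * zt n t ^ 2 - zt n t ^ 3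
          + ∑ ℓ ∈ univ.erase n,
              2 * (ztd n t - Complex.I * ω * zt n t + c * zt n t ^ 2)
                * (ztd ℓ t - Complex.I * ω * zt ℓ t + c * zt ℓ t ^ 2)
                / (zt n t - zt ℓ t)) t) := by
  obtain rfl : zt = fun n (t : ℝ) => Complex.exp (Complex.I * ω * t) * ζ n (τ t) := funext₂ hzt
  have hE := hasDerivAt_cexp_mul_ofReal (Complex.I * ω)
  have hτd : ∀ t : ℝ, HasDerivAt τ (Complex.exp (Complex.I * ω * t)) t := by
    rw [funext hτ]
    exact hasDerivAt_cexp_mul_ofReal_sub_one_div (mul_ne_zero Complex.I_ne_zero hω)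
  refine ⟨fun n t => Complex.I * ω * (Complex.exp (Complex.I * ω * t) * ζ n (τ t))
      + Complex.exp (Complex.I * ω * t) ^ 2 * ζd n (τ t),
    fun n t => hasDerivAt_smul_comp_of_deriv_eq_mul (hE t) (hτd t) (hζ n t), fun n t => ?_⟩
  refine (hasDerivAt_goldfish_velocity (hE t) (hτd t) (Complex.exp_ne_zero _) (hζ · t)
    (fun n => (hζd n t).congr_deriv (hEq n t)) n).congr_deriv ?_
  simp only [goldfishForce, add_sub_cancel_left]
  linear_combination
    (-2 * ω ^ 2 * Complex.exp (Complex.I * ω * t) * ζ n (τ t)) * Complex.I_sq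

/-- "the trick": If `ζ₁,…,ζ_N` are twice complex-differentiable on an open
set `Ω` containing the curve `τ(t) = (e^{iωt} − 1)/(iω)`, take pairwise distinct values
along the curve, and satisfy `ζ_n'' = −3ζ_n'ζ_n − ζ_n³ + Σ_{ℓ≠n} 2(ζ_n' + cζ_n²)(ζ_ℓ' + cζ_ℓ²)/(ζ_n − ζ_ℓ)`
on `Ω`, then `z̃_n(t) = e^{iωt}·ζ_n(τ(t))` is twice differentiable in `t` and satisfies the
isochronous goldfish equations. -/
theorem goldfish_stmt15 (N : ℕ) (hN : 0 < N) (c : ℂ) (ω : ℝ) (hω : ω ≠ 0)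
    (τ : ℝ → ℂ)
    (hτ : ∀ t : ℝ, τ t = (Complex.exp (Complex.I * (ω : ℂ) * (t : ℂ)) - 1)
      / (Complex.I * (ω : ℂ)))
    (Ω : Set ℂ) (hΩopen : IsOpen Ω) (hΩτ : ∀ t : ℝ, τ t ∈ Ω)
    (ζ ζd ζdd : Fin N → ℂ → ℂ)
    (hζ : ∀ n, ∀ w ∈ Ω, HasDerivAt (ζ n) (ζd n w) w)
    (hζd : ∀ n, ∀ w ∈ Ω, HasDerivAt (ζd n) (ζdd n w) w)
    (hsep : ∀ t : ℝ, ∀ n m : Fin N, n ≠ m → ζ n (τ t) ≠ ζ m (τ t))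
    (hEq : ∀ n, ∀ w ∈ Ω, ζdd n w =
      -3 * ζd n w * ζ n w - (ζ n w) ^ 3
        + ∑ ℓ ∈ Finset.univ.erase n,
            2 * (ζd n w + c * (ζ n w) ^ 2) * (ζd ℓ w + c * (ζ ℓ w) ^ 2)
              / (ζ n w - ζ ℓ w))
    (zt : Fin N → ℝ → ℂ)
    (hzt : ∀ n, ∀ t : ℝ, zt n t = Complex.exp (Complex.I * (ω : ℂ) * (t : ℂ)) * ζ n (τ t)) :
    ∃ ztd : Fin N → ℝ → ℂ,
      (∀ n, ∀ t : ℝ, HasDerivAt (zt n) (ztd n t) t) ∧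
      (∀ n, ∀ t : ℝ, HasDerivAt (ztd n)
        (3 * Complex.I * (ω : ℂ) * ztd n t + 2 * (ω : ℂ) ^ 2 * zt n t
          - 3 * ztd n t * zt n t + 3 * Complex.I * (ω : ℂ) * (zt n t) ^ 2 - (zt n t) ^ 3
          + ∑ ℓ ∈ Finset.univ.erase n,
              2 * (ztd n t - Complex.I * (ω : ℂ) * zt n t + c * (zt n t) ^ 2)
                * (ztd ℓ t - Complex.I * (ω : ℂ) * zt ℓ t + c * (zt ℓ t) ^ 2)
                / (zt n t - zt ℓ t)) t) := by
  exact goldfish_stmt15_general c (Complex.ofReal_ne_zero.2 hω) τ hτ ζ ζd ζdd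
    (fun n t => hζ n _ (hΩτ t)) (fun n t => hζd n _ (hΩτ t)) hsep (fun n t => hEq n _ (hΩτ t))
    zt hzt
end

section
/- Let a, b, γ be complex numbers, set α = a·(γ + b) and β = −a + b·(γ + b), and let z₁,…,z_N : ℝ → ℂ be twice differentiable with pairwise distinct values for every t, satisfying the model (i) equations z_n'' = −3·z_n'·z_n + γ·z_n' − z_n³ + γ·z_n² + β·z_n + α + Σ_{ℓ≠n} 2·(z_n' + a + b·z_n + z_n²)·(z_ℓ' + a + b·z_ℓ + z_ℓ²)/(z_n − z_ℓ). Define c_m(t) = (−1)^m·e_m(z₁(t),…,z_N(t)) for m = 1,…,N, where e_m is the m-th elementary symmetric polynomial, with the conventions c₀ = 1 and c_m = 0 for m < 0 or m > N. Then for every m = 1,…,N and every t: c_m'' + p_m^{(−1)}·c_{m−1}' + p_m^{(0)}·c_m' + p_m^{(1)}·c_{m+1}' + q_m^{(−2)}·c_{m−2} + q_m^{(−1)}·c_{m−1} + q_m^{(0)}·c_m + q_m^{(1)}·c_{m+1} + q_m^{(2)}·c_{m+2} = 2·c₁·c_m' − 2(N−m+1)·a·c₁·c_{m−1} + [c₁'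 − c₁² + 2(m−1)·b·c₁ − γ·c₁]·c_m + (2m+1)·c₁·c_{m+1}, where p_m^{(−1)} = −2(N−m+1)·a, p_m^{(0)} = 2(m−1)·b − γ, p_m^{(1)} = 2m+1, q_m^{(−2)} = (N−m+2)(N−m+1)·a², q_m^{(−1)} = (N−m+1)·[−(2m−3)·b + γ]·a, q_m^{(0)} = −m(2N−2m+1)·a + m(m−2)·b² − m·b·γ, q_m^{(1)} = 2(m²−1)·b − (m+1)·γ, q_m^{(2)} = m(m+2). -/
open Finset

/-!
Put `D = a + b X + X²`, `L = ∂/∂t - D ∂/∂X` and `u_n = z_n' + D(z_n)`, so that model (i) reads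
`u_n' = (γ + b - z_n) u_n + 2 u_n ∑_{ℓ ≠ n} u_ℓ / (z_n - z_ℓ)`. With `P = ∏ (X - z_n)`, the claimed
system says that a certain combination of `L²P`, `LP` and `P` vanishes, one coefficient of `X` at a
time. Since `c₀ = 1` and `c_m = 0` for `m < 0`, the coefficients of `X ^ k` with `k ≥ N` cancel
identically, so this combination has degree less than `N`. At a root `z_n` of `P`, the values of
`LP` and `L²P` involve only `Q = ∏_{ℓ ≠ n} (X - z_ℓ)` and its logarithmic derivative along `L`,
which is minus the sum of the `u_ℓ / (z_n - z_ℓ)` up to a term affine in the roots; the equation of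
motion of `z_n` then says exactly that the combination vanishes at `z_n`. A polynomial of degree
less than `N` with `N` distinct roots is zero.
-/

section Goldfish

open Polynomial Lagrange

variable {R K 𝕜 ι : Type*}

section TopCoeff

variable [CommRing R]

/-- The coefficient of `X ^ (N - m)`, as a linear functional, for every integer `m`; it is `0` when
`m > N`. For the monic polynomial with roots `z₁, …, z_N` it is the `c_m` of the paper. -/
noncomputable def topCoeff (N : ℕ) (m : ℤ) : R[X] →ₗ[R] R :=
  if m ≤ N then lcoeff R (N - m).toNat else 0

lemma topCoeff_apply (N : ℕ) (m : ℤ) (p : R[X]) :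
    topCoeff N m p = if m ≤ N then p.coeff (N - m).toNat else 0 := by
  unfold topCoeff
  split_ifs <;> simp

lemma topCoeff_natCast_sub (N k : ℕ) (p : R[X]) : topCoeff N (N - k) p = p.coeff k := by
  simp [topCoeff_apply]

lemma topCoeff_C_mul (N : ℕ) (m : ℤ) (r : R) (p : R[X]) :
    topCoeff N m (C r * p) = r * topCoeff N m p := by
  rw [C_mul', map_smul, smul_eq_mul]

lemma topCoeff_X_mul (N : ℕ) (m : ℤ) (p : R[X]) :
    topCoeff N m (X * p) = topCoeff N (m + 1) p := by
  rcases lt_trichotomy m N with h | rfl | h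
  · obtain ⟨k, rfl⟩ : ∃ k : ℕ, m = N - (k + 1 : ℕ) := ⟨(N - m - 1).toNat, by lia⟩
    rw [topCoeff_natCast_sub, coeff_X_mul, ← topCoeff_natCast_sub N]
    congr 2
    push_cast
    ring
  · simp [topCoeff_apply]
  · simp [topCoeff_apply, h.not_ge, (h.trans (lt_add_one m)).not_ge]

lemma topCoeff_derivative (N : ℕ) (m : ℤ) (p : R[X]) :
    topCoeff N m (derivative p) = (N - m + 1) * topCoeff N (m - 1) p := by
  rcases lt_trichotomy m (N + 1) with h | rfl | h
  · obtain ⟨k, rfl⟩ : ∃ k : ℕ, m = N - k := ⟨(N - m).toNat, by lia⟩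
    rw [topCoeff_natCast_sub, coeff_derivative, ← topCoeff_natCast_sub N (k + 1), mul_comm]
    push_cast
    ring_nf
  · simp [topCoeff_apply]
  · rw [topCoeff_apply, topCoeff_apply, if_neg (by lia), if_neg (by lia), mul_zero]

lemma degree_lt_iff_topCoeff_eq_zero (N : ℕ) (p : R[X]) :
    p.degree < N ↔ ∀ m ≤ 0, topCoeff N m p = 0 := by
  rw [degree_lt_iff_coeff_zero]
  constructor
  · intro h m hm
    rw [topCoeff_apply, if_pos (by lia)]
    exact h _ (by lia)
  · intro h k hk
    rw [← topCoeff_natCast_sub N]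
    exact h _ (by lia)

lemma topCoeff_nodal (s : Finset ι) (v : ι → R) (m : ℤ) :
    topCoeff #s m (nodal s v) =
      if 0 ≤ m ∧ m ≤ #s then
        (-1) ^ m.toNat * ∑ u ∈ s.powersetCard m.toNat, ∏ i ∈ u, v i
      else 0 := by
  rw [topCoeff_apply, ← esymm_map_val]
  by_cases hm : m ≤ #s
  · rcases lt_or_ge m 0 with hneg | hpos
    · rw [if_pos hm, if_neg (by lia)]
      nontriviality R
      exact coeff_eq_zero_of_natDegree_lt (by rw [natDegree_nodal]; lia)
    · have hcard : (#s - m : ℤ).toNat ≤ Multiset.card (s.val.map v) := by simp; lia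
      have hcoeff := Multiset.prod_X_sub_C_coeff (s.val.map v) hcard
      rw [Multiset.map_map, Multiset.card_map, card_val,
        show #s - (#s - m : ℤ).toNat = m.toNat by lia] at hcoeff
      rw [if_pos hm, if_pos ⟨hpos, hm⟩]
      exact hcoeff
  · rw [if_neg hm, if_neg (hm ·.2)]

lemma topCoeff_zero_nodal (s : Finset ι) (v : ι → R) : topCoeff #s 0 (nodal s v) = 1 := by
  simp [topCoeff_nodal]

lemma topCoeff_nodal_of_neg (s : Finset ι) (v : ι → R) {m : ℤ} (hm : m < 0) :
    topCoeff #s m (nodal s v) = 0 := by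
  rw [topCoeff_nodal, if_neg (by lia)]

lemma topCoeff_one_nodal {s : Finset ι} (hs : s.Nonempty) (v : ι → R) :
    topCoeff #s 1 (nodal s v) = -∑ i ∈ s, v i := by
  rw [topCoeff_nodal, if_pos (by have := hs.card_pos; lia)]
  simp [powersetCard_one]

end TopCoeff

section NodalVariation

variable [CommRing R] [DecidableEq ι]

/-- The time derivative of `nodal s v = ∏ i ∈ s, (X - v i)` when the roots move with
velocities `w`. -/
noncomputable def nodalVariation (s : Finset ι) (v w : ι → R) : R[X] :=
  -∑ i ∈ s, w i • nodal (s.erase i) v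

/-- The second time derivative of `nodal s v = ∏ i ∈ s, (X - v i)` when the roots move with
velocities `w` and accelerations `w'`. -/
noncomputable def nodalVariation₂ (s : Finset ι) (v w w' : ι → R) : R[X] :=
  nodalVariation s v w' - ∑ i ∈ s, w i • nodalVariation (s.erase i) v w

variable {s : Finset ι} (v w w' : ι → R)

lemma nodalVariation_insert {n : ι} (hn : n ∉ s) :
    nodalVariation (insert n s) v w = (X - C (v n)) * nodalVariation s v w - w n • nodal s v := by
  have hfactor : ∀ i ∈ s, nodal ((insert n s).erase i) v = (X - C (v n)) * nodal (s.erase i) v := by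
    intro i hi
    rw [erase_insert_of_ne (ne_of_mem_of_not_mem hi hn).symm,
      nodal_insert_eq_nodal (mt mem_of_mem_erase hn)]
  rw [nodalVariation, nodalVariation, sum_insert hn, erase_insert hn,
    sum_congr rfl fun i hi => congrArg (w i • ·) (hfactor i hi)]
  simp only [← mul_smul_comm, ← mul_sum]
  ring

lemma nodalVariation_eq_erase {n : ι} (hn : n ∈ s) :
    nodalVariation s v w =
      (X - C (v n)) * nodalVariation (s.erase n) v w - w n • nodal (s.erase n) v := by
  conv_lhs => rw [← insert_erase hn]
  exact nodalVariation_insert v w (notMem_erase n s)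

lemma derivative_nodal_eq_nodalVariation :
    derivative (nodal s v) = nodalVariation s v (fun _ => -1) := by
  simp [derivative_nodal, nodalVariation]

lemma eval_nodalVariation_node {n : ι} (hn : n ∈ s) :
    (nodalVariation s v w).eval (v n) = -(w n * (nodal (s.erase n) v).eval (v n)) := by
  simp [nodalVariation_eq_erase v w hn]

lemma eval_nodalVariation_of_ne [Field K] (v w : ι → K) {x : K}
    (hx : ∀ i ∈ s, x ≠ v i) :
    (nodalVariation s v w).eval x = -((nodal s v).eval x * ∑ i ∈ s, w i / (x - v i)) := by
  simp only [nodalVariation, eval_neg, eval_finsetSum, eval_smul, smul_eq_mul, mul_sum]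
  refine congrArg Neg.neg (sum_congr rfl fun i hi => ?_)
  have hxi : x - v i ≠ 0 := sub_ne_zero.2 (hx i hi)
  rw [nodal_eq_mul_nodal_erase hi, eval_mul, eval_sub, eval_X, eval_C]
  field_simp

lemma eval_nodalVariation₂_node {n : ι} (hn : n ∈ s) :
    (nodalVariation₂ s v w w').eval (v n) =
      -(w' n * (nodal (s.erase n) v).eval (v n))
        - 2 * (w n * (nodalVariation (s.erase n) v w).eval (v n)) := by
  have hrest : ∑ i ∈ s.erase n, w i * (nodalVariation (s.erase i) v w).eval (v n) =
      w n * (nodalVariation (s.erase n) v w).eval (v n) := by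
    conv_rhs => rw [nodalVariation]
    simp only [eval_neg, eval_finsetSum, eval_smul, smul_eq_mul, mul_neg, mul_sum,
      ← sum_neg_distrib]
    refine sum_congr rfl fun i hi => ?_
    rw [eval_nodalVariation_node v w (mem_erase.2 ⟨(ne_of_mem_erase hi).symm, hn⟩),
      erase_right_comm]
    ring
  simp only [nodalVariation₂, eval_sub, eval_finsetSum, eval_smul, smul_eq_mul]
  rw [eval_nodalVariation_node v w' hn, ← add_sum_erase s _ hn, hrest]
  ring

lemma degree_nodalVariation_lt : (nodalVariation s v w).degree < #s := by
  nontriviality R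
  rw [← mem_degreeLT, nodalVariation]
  refine neg_mem (sum_mem fun i hi => Submodule.smul_mem _ _ (mem_degreeLT.2 ?_))
  rw [degree_nodal]
  exact_mod_cast card_erase_lt_of_mem hi

lemma degree_nodalVariation₂_lt : (nodalVariation₂ s v w w').degree < #s := by
  rw [← mem_degreeLT, nodalVariation₂]
  refine sub_mem (mem_degreeLT.2 (degree_nodalVariation_lt v w'))
    (sum_mem fun i _ => Submodule.smul_mem _ _ (mem_degreeLT.2 ?_))
  exact (degree_nodalVariation_lt v w).trans_le (by exact_mod_cast card_erase_le)

end NodalVariation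

section Transport

/-- With `p' = ∂p/∂t`, the derivative `(∂/∂t - d ∂/∂X) p` of a time-dependent polynomial `p` along
the vector field `∂/∂t - d ∂/∂X`. -/
noncomputable def transport [CommRing R] (d p p' : R[X]) : R[X] := p' - d * derivative p

lemma eval_transport_nodal_node [CommRing R] [DecidableEq ι] {s : Finset ι} (d : R[X])
    (v w : ι → R) {n : ι} (hn : n ∈ s) :
    (transport d (nodal s v) (nodalVariation s v w)).eval (v n) =
      -((w n + d.eval (v n)) * (nodal (s.erase n) v).eval (v n)) := by
  rw [transport, eval_sub, eval_mul, eval_nodalVariation_node v w hn,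
    eval_nodal_derivative_eval_node_eq hn]
  ring

lemma eval_transport_transport_nodal_node [CommRing R] [DecidableEq ι] {s : Finset ι} (d : R[X])
    (v w w' : ι → R) {n : ι} (hn : n ∈ s) :
    (transport d (transport d (nodal s v) (nodalVariation s v w))
        (transport d (nodalVariation s v w) (nodalVariation₂ s v w w'))).eval (v n) =
      (d.eval (v n) * (derivative d).eval (v n) - w' n) * (nodal (s.erase n) v).eval (v n)
        - 2 * (w n + d.eval (v n)) *
          (transport d (nodal (s.erase n) v) (nodalVariation (s.erase n) v w)).eval (v n) := by
  simp only [transport, eval_sub, eval_mul, eval_nodalVariation₂_node v w w' hn]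
  rw [nodalVariation_eq_erase v w hn, nodal_eq_mul_nodal_erase hn]
  simp only [derivative_sub, derivative_mul, derivative_smul, derivative_add, derivative_X,
    derivative_C, derivative_one, eval_sub, eval_add, eval_mul, eval_smul, eval_X, eval_C, eval_one,
    eval_zero, derivative_zero, smul_eq_mul]
  ring

lemma eval_transport_nodal_of_ne [Field K] [DecidableEq ι] {s : Finset ι} (d : K[X]) (v w : ι → K)
    {x : K} (hx : ∀ i ∈ s, x ≠ v i) :
    (transport d (nodal s v) (nodalVariation s v w)).eval x =
      -((nodal s v).eval x * ∑ i ∈ s, (w i + d.eval x) / (x - v i)) := by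
  rw [transport, derivative_nodal_eq_nodalVariation, eval_sub, eval_mul,
    eval_nodalVariation_of_ne v _ hx, eval_nodalVariation_of_ne v _ hx]
  simp only [div_eq_mul_inv, add_mul, neg_mul, one_mul, sum_add_distrib, sum_neg_distrib, ← mul_sum]
  ring

end Transport

section GoldfishOperator

variable [CommRing R]

/-- The quadratic polynomial `a + b x + x²` of the equations of motion: they couple the particles
through the quantities `z_n' + a + b z_n + z_n²` only. -/
noncomputable def drift (a b : R) : R[X] := C a + C b * X + X ^ 2

lemma eval_drift (a b x : R) : (drift a b).eval x = a + b * x + x ^ 2 := by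
  simp [drift]

lemma eval_derivative_drift (a b x : R) : (derivative (drift a b)).eval x = b + 2 * x := by
  simp [drift, one_add_one_eq_two]

/-- The linear second-order differential expression in `X` and `t` annihilating
`p = ∏ (X - z_n)`; here `p'` and `p''` stand for `∂p/∂t` and `∂²p/∂t²`.
The lower-order terms are chosen so that its coefficient of `X ^ (N - m)` is the `m`-th residual. -/
noncomputable def goldfishOperator (N : ℕ) (a b γ : R) (p p' p'' : R[X]) : R[X] :=
  transport (drift a b) (transport (drift a b) p p') (transport (drift a b) p' p'')
    + (C (2 * N - 1 : R) * (X + C b) - C (b + γ + 2 * topCoeff N 1 p)) * transport (drift a b) p p'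
    + (C (N * (N - 2) : R) * (X + C b) ^ 2 - C (N * γ + (2 * N - 1) * topCoeff N 1 p) * (X + C b)
      + C (topCoeff N 1 p ^ 2 + (b + γ) * topCoeff N 1 p - topCoeff N 1 p' - N * a)) * p

/-- The difference of the two sides of the `m`-th equation of the system (Eqcm1), for integer
sequences `c`, `c'`, `c''` in place of the `c_m` and their first two time derivatives. -/
def goldfishResidual (N : ℕ) (a b γ : R) (c c' c'' : ℤ → R) (m : ℤ) : R :=
  (c'' m
    + (-2 * (N - m + 1) * a) * c' (m - 1)
    + (2 * (m - 1) * b - γ) * c' m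
    + (2 * m + 1) * c' (m + 1)
    + ((N - m + 2) * (N - m + 1) * a ^ 2) * c (m - 2)
    + ((N - m + 1) * (-(2 * m - 3) * b + γ) * a) * c (m - 1)
    + (-m * (2 * N - 2 * m + 1) * a + m * (m - 2) * b ^ 2 - m * b * γ) * c m
    + (2 * (m ^ 2 - 1) * b - (m + 1) * γ) * c (m + 1)
    + (m * (m + 2)) * c (m + 2))
  - (2 * c 1 * c' m
    - 2 * (N - m + 1) * a * c 1 * c (m - 1)
    + (c' 1 - c 1 ^ 2 + 2 * (m - 1) * b * c 1 - γ * c 1) * c m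
    + (2 * m + 1) * c 1 * c (m + 1))

lemma topCoeff_goldfishOperator (N : ℕ) (a b γ : R) (p p' p'' : R[X]) (m : ℤ) :
    topCoeff N m (goldfishOperator N a b γ p p' p'') =
      goldfishResidual N a b γ (topCoeff N · p) (topCoeff N · p') (topCoeff N · p'') m := by
  simp only [goldfishOperator, transport, drift, goldfishResidual, derivative_mul, derivative_C,
    derivative_X, sq, zero_mul, zero_add, mul_one, one_mul, add_mul, sub_mul, mul_add, mul_sub,
    mul_assoc, map_add, map_sub, topCoeff_C_mul, topCoeff_X_mul, topCoeff_derivative]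
  push_cast
  ring_nf

lemma goldfishResidual_of_nonpos (N : ℕ) (a b γ : R) {c c' c'' : ℤ → R} (hc₀ : c 0 = 1)
    (hc : ∀ m < 0, c m = 0) (hc' : ∀ m ≤ 0, c' m = 0) (hc'' : ∀ m ≤ 0, c'' m = 0) {m : ℤ}
    (hm : m ≤ 0) : goldfishResidual N a b γ c c' c'' m = 0 := by
  obtain rfl | rfl | rfl | hm : m = 0 ∨ m = -1 ∨ m = -2 ∨ m + 2 < 0 := by lia
  · norm_num [goldfishResidual, hc₀, hc, hc', hc'']
    ring
  · norm_num [goldfishResidual, hc₀, hc, hc', hc'']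
  · norm_num [goldfishResidual, hc₀, hc, hc', hc'']
  · rw [goldfishResidual, hc (m - 2) (by lia), hc (m - 1) (by lia), hc m (by lia),
      hc (m + 1) (by lia), hc (m + 2) hm, hc' (m - 1) (by lia), hc' m (by lia),
      hc' (m + 1) (by lia), hc'' m (by lia)]
    ring

lemma degree_goldfishOperator_nodal_lt [DecidableEq ι] (s : Finset ι) (a b γ : R)
    (v w w' : ι → R) :
    (goldfishOperator #s a b γ (nodal s v) (nodalVariation s v w)
      (nodalVariation₂ s v w w')).degree < #s := by
  rw [degree_lt_iff_topCoeff_eq_zero]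
  intro m hm
  rw [topCoeff_goldfishOperator]
  exact goldfishResidual_of_nonpos _ _ _ _ (topCoeff_zero_nodal s v)
    (fun _ => topCoeff_nodal_of_neg s v)
    ((degree_lt_iff_topCoeff_eq_zero _ _).1 (degree_nodalVariation_lt v w))
    ((degree_lt_iff_topCoeff_eq_zero _ _).1 (degree_nodalVariation₂_lt v w w')) hm

end GoldfishOperator

section RootDynamics

variable [Field K] {s : Finset ι}

lemma sum_add_eval_drift_div (a b : K) (v w : ι → K) {x : K} (hx : ∀ i ∈ s, x ≠ v i) :
    ∑ i ∈ s, (w i + (drift a b).eval x) / (x - v i) =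
      ∑ i ∈ s, (w i + (drift a b).eval (v i)) / (x - v i) + ∑ i ∈ s, (x + v i + b) := by
  rw [← sum_add_distrib]
  refine sum_congr rfl fun i hi => ?_
  have hxi : x - v i ≠ 0 := sub_ne_zero.2 (hx i hi)
  simp only [eval_drift]
  field_simp
  ring

variable [DecidableEq ι]

lemma sum_erase_add_add_eq_topCoeff {n : ι} (hn : n ∈ s) (b : K) (v : ι → K) :
    ∑ i ∈ s.erase n, (v n + v i + b) =
      (#s - 2) * v n + (#s - 1) * b - topCoeff #s 1 (nodal s v) := by
  rw [sum_erase_eq_sub hn, topCoeff_one_nodal ⟨n, hn⟩]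
  simp only [sum_add_distrib, sum_const, nsmul_eq_mul]
  ring

/-- The acceleration of particle `n` in model (i), for positions `v` and velocities `w`. In terms of
`u i = w i + a + b (v i) + (v i)²`, the equation of motion is
`du n/dt = (γ + b - v n) u n + 2 u n ∑ u ℓ / (v n - v ℓ)`. -/
noncomputable def goldfishAcceleration (s : Finset ι) (a b γ : K) (v w : ι → K) (n : ι) : K :=
  (γ + b - v n) * (w n + (drift a b).eval (v n)) - (derivative (drift a b)).eval (v n) * w n
    + 2 * (w n + (drift a b).eval (v n)) *
      ∑ ℓ ∈ s.erase n, (w ℓ + (drift a b).eval (v ℓ)) / (v n - v ℓ)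

lemma goldfishAcceleration_eq (s : Finset ι) (a b γ : K) (v w : ι → K) (n : ι) :
    goldfishAcceleration s a b γ v w n =
      -3 * w n * v n + γ * w n - v n ^ 3 + γ * v n ^ 2 + (-a + b * (γ + b)) * v n + a * (γ + b)
        + ∑ ℓ ∈ s.erase n,
            2 * (w n + a + b * v n + v n ^ 2) * (w ℓ + a + b * v ℓ + v ℓ ^ 2) / (v n - v ℓ) := by
  simp only [goldfishAcceleration, eval_drift, eval_derivative_drift, ← add_assoc, mul_div_assoc,
    ← mul_sum]
  ring

lemma eval_goldfishOperator_nodal_node {a b γ : K} {v w w' : ι → K} {n : ι} (hn : n ∈ s)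
    (hv : ∀ i ∈ s.erase n, v n ≠ v i) (hw' : w' n = goldfishAcceleration s a b γ v w n) :
    (goldfishOperator #s a b γ (nodal s v) (nodalVariation s v w)
      (nodalVariation₂ s v w w')).eval (v n) = 0 := by
  simp only [goldfishOperator, eval_add, eval_sub, eval_mul, eval_C, eval_X,
    eval_transport_transport_nodal_node _ v w w' hn, eval_transport_nodal_node _ v w hn,
    eval_transport_nodal_of_ne _ v w hv, eval_nodal_at_node hn, sum_add_eval_drift_div a b v w hv,
    sum_erase_add_add_eq_topCoeff hn, hw', goldfishAcceleration, eval_derivative_drift]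
  ring

theorem goldfishOperator_nodal_eq_zero {a b γ : K} {v w w' : ι → K} (hv : Set.InjOn v s)
    (hw' : ∀ n ∈ s, w' n = goldfishAcceleration s a b γ v w n) :
    goldfishOperator #s a b γ (nodal s v) (nodalVariation s v w) (nodalVariation₂ s v w w') = 0 :=
  eq_zero_of_degree_lt_of_eval_index_eq_zero s hv
    (degree_goldfishOperator_nodal_lt s a b γ v w w') fun n hn =>
      eval_goldfishOperator_nodal_node hn
        (fun _ hi => hv.ne hn (mem_of_mem_erase hi) (ne_of_mem_erase hi).symm) (hw' n hn)

end RootDynamics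

section CoeffDeriv

variable [NontriviallyNormedField 𝕜] [NormedField K] [NormedAlgebra 𝕜 K]

/-- `p'` is the derivative at time `t` of the polynomial `p`, taken coefficient by coefficient. -/
def HasCoeffDerivAt (p : 𝕜 → K[X]) (p' : K[X]) (t : 𝕜) : Prop :=
  ∀ k, HasDerivAt (fun τ => (p τ).coeff k) (p'.coeff k) t

namespace HasCoeffDerivAt

variable {p q : 𝕜 → K[X]} {p' q' : K[X]} {f : 𝕜 → K} {f' : K} {t : 𝕜}

lemma hasDerivAt_topCoeff (hp : HasCoeffDerivAt p p' t) (N : ℕ) (m : ℤ) :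
    HasDerivAt (fun τ => topCoeff N m (p τ)) (topCoeff N m p') t := by
  simp only [topCoeff_apply]
  split_ifs
  · exact hp _
  · exact hasDerivAt_const _ _

lemma mul (hp : HasCoeffDerivAt p p' t) (hq : HasCoeffDerivAt q q' t) :
    HasCoeffDerivAt (fun τ => p τ * q τ) (p' * q t + p t * q') t := by
  intro k
  simp only [coeff_add, coeff_mul, ← sum_add_distrib]
  exact HasDerivAt.fun_sum fun x _ => (hp x.1).fun_mul (hq x.2)

lemma smul (hf : HasDerivAt f f' t) (hp : HasCoeffDerivAt p p' t) :
    HasCoeffDerivAt (fun τ => f τ • p τ) (f' • p t + f t • p') t := by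
  intro k
  simpa only [coeff_add, coeff_smul, smul_eq_mul] using hf.fun_mul (hp k)

lemma neg_sum {p : ι → 𝕜 → K[X]} {p' : ι → K[X]} {s : Finset ι}
    (hp : ∀ i ∈ s, HasCoeffDerivAt (p i) (p' i) t) :
    HasCoeffDerivAt (fun τ => -∑ i ∈ s, p i τ) (-∑ i ∈ s, p' i) t := by
  intro k
  simpa only [coeff_neg, finsetSum_coeff] using (HasDerivAt.fun_sum fun i hi => hp i hi k).fun_neg

lemma X_sub_C (hf : HasDerivAt f f' t) : HasCoeffDerivAt (fun τ => X - C (f τ)) (-C f') t := by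
  intro k
  simp only [coeff_sub, coeff_neg, coeff_C]
  split_ifs
  · exact hf.const_sub _
  · simpa using hasDerivAt_const _ _

end HasCoeffDerivAt

variable [DecidableEq ι] {s : Finset ι} {t : 𝕜} {z zd : ι → 𝕜 → K} {zd' : ι → K}

lemma hasCoeffDerivAt_nodal (hz : ∀ i ∈ s, HasDerivAt (z i) (zd' i) t) :
    HasCoeffDerivAt (fun τ => nodal s (z · τ)) (nodalVariation s (z · t) zd') t := by
  induction s using Finset.induction_on with
  | empty => exact fun k => by simpa [nodalVariation] using hasDerivAt_const _ _
  | insert n s hn ih =>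
    simp only [forall_mem_insert] at hz
    simp only [nodal_insert_eq_nodal hn, nodalVariation_insert _ _ hn]
    convert (HasCoeffDerivAt.X_sub_C hz.1).mul (ih hz.2) using 1
    rw [smul_eq_C_mul]
    ring

lemma hasCoeffDerivAt_nodalVariation (hz : ∀ i ∈ s, HasDerivAt (z i) (zd i t) t)
    (hzd : ∀ i ∈ s, HasDerivAt (zd i) (zd' i) t) :
    HasCoeffDerivAt (fun τ => nodalVariation s (z · τ) (zd · τ))
      (nodalVariation₂ s (z · t) (zd · t) zd') t := by
  have hterm : ∀ i ∈ s, HasCoeffDerivAt (fun τ => zd i τ • nodal (s.erase i) (z · τ))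
      (zd' i • nodal (s.erase i) (z · t)
        + zd i t • nodalVariation (s.erase i) (z · t) (zd · t)) t :=
    fun i hi => .smul (hzd i hi) (hasCoeffDerivAt_nodal fun j hj => hz j (mem_of_mem_erase hj))
  have hsum := HasCoeffDerivAt.neg_sum hterm
  rwa [sum_add_distrib, neg_add, ← sub_eq_add_neg] at hsum

end CoeffDeriv

theorem goldfish_stmt16_general [NontriviallyNormedField 𝕜] [NormedField K] [NormedAlgebra 𝕜 K]
    {N : ℕ} {a b γ α β : K} (hα : α = a * (γ + b)) (hβ : β = -a + b * (γ + b))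
    {z zd zdd : Fin N → 𝕜 → K}
    (hz : ∀ n t, HasDerivAt (z n) (zd n t) t) (hzd : ∀ n t, HasDerivAt (zd n) (zdd n t) t)
    (hsep : ∀ t n m, n ≠ m → z n t ≠ z m t)
    (hNewton : ∀ n t, zdd n t =
      -3 * zd n t * z n t + γ * zd n t - z n t ^ 3 + γ * z n t ^ 2 + β * z n t + α
        + ∑ ℓ ∈ univ.erase n,
            2 * (zd n t + a + b * z n t + z n t ^ 2) * (zd ℓ t + a + b * z ℓ t + z ℓ t ^ 2)
              / (z n t - z ℓ t))
    {c cd cdd : ℤ → 𝕜 → K}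
    (hc : ∀ m t, c m t =
      if 0 ≤ m ∧ m ≤ (N : ℤ) then
        (-1) ^ m.toNat * ∑ s ∈ univ.powersetCard m.toNat, ∏ n ∈ s, z n t
      else 0)
    (hcd : ∀ m t, HasDerivAt (c m) (cd m t) t) (hcdd : ∀ m t, HasDerivAt (cd m) (cdd m t) t)
    (m : ℤ) (t : 𝕜) : goldfishResidual N a b γ (c · t) (cd · t) (cdd · t) m = 0 := by
  have hc_eq (j : ℤ) : c j = fun τ => topCoeff N j (nodal univ (z · τ)) := by
    funext τ
    simpa only [card_fin, hc] using (topCoeff_nodal univ (z · τ) j).symm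
  have hcd_eq (j : ℤ) : cd j = fun τ => topCoeff N j (nodalVariation univ (z · τ) (zd · τ)) :=
    funext fun τ => (hcd j τ).unique <| hc_eq j ▸
      (hasCoeffDerivAt_nodal fun n _ => hz n τ).hasDerivAt_topCoeff N j
  have hcdd_eq (j : ℤ) :
      cdd j t = topCoeff N j (nodalVariation₂ univ (z · t) (zd · t) (zdd · t)) :=
    (hcdd j t).unique <| hcd_eq j ▸
      (hasCoeffDerivAt_nodalVariation (fun n _ => hz n t) fun n _ => hzd n t).hasDerivAt_topCoeff
        N j
  have hinj : Set.InjOn (z · t) (univ : Finset (Fin N)) :=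
    fun n _ ℓ _ => not_imp_not.1 (hsep t n ℓ)
  have hacc : ∀ n ∈ univ, zdd n t = goldfishAcceleration univ a b γ (z · t) (zd · t) n :=
    fun n _ => by rw [goldfishAcceleration_eq, hNewton, hα, hβ]
  have hzero := goldfishOperator_nodal_eq_zero hinj hacc
  rw [card_fin] at hzero
  simp only [hc_eq, hcd_eq, hcdd_eq]
  rw [← topCoeff_goldfishOperator, hzero, map_zero]

end Goldfish

/-- For solutions of model (i), the coefficients
`c_m(t) = (−1)^m·e_m(z₁(t),…,z_N(t))` (with `c₀ = 1`, `c_m = 0` for `m < 0` or `m > N`)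
satisfy the second-order system (Eqcm1) with the stated coefficients
`p_m^{(j)}`, `q_m^{(j)}`. -/
theorem goldfish_stmt16 (N : ℕ) (hN : 0 < N) (a b γ α β : ℂ)
    (hα : α = a * (γ + b)) (hβ : β = -a + b * (γ + b))
    (z zd zdd : Fin N → ℝ → ℂ)
    (hz : ∀ n, ∀ t : ℝ, HasDerivAt (z n) (zd n t) t)
    (hzd : ∀ n, ∀ t : ℝ, HasDerivAt (zd n) (zdd n t) t)
    (hsep : ∀ t : ℝ, ∀ n m : Fin N, n ≠ m → z n t ≠ z m t)
    (hNewton : ∀ n, ∀ t : ℝ, zdd n t =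
      -3 * zd n t * z n t + γ * zd n t - (z n t) ^ 3 + γ * (z n t) ^ 2
        + β * z n t + α
        + ∑ ℓ ∈ Finset.univ.erase n,
            2 * (zd n t + a + b * z n t + (z n t) ^ 2)
              * (zd ℓ t + a + b * z ℓ t + (z ℓ t) ^ 2) / (z n t - z ℓ t))
    (C Cd Cdd : ℤ → ℝ → ℂ)
    (hC : ∀ (m : ℤ) (t : ℝ), C m t =
      if 0 ≤ m ∧ m ≤ (N : ℤ) then
        (-1 : ℂ) ^ m.toNat *
          ∑ s ∈ Finset.univ.powersetCard m.toNat, ∏ n ∈ s, z n t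
      else 0)
    (hCd : ∀ (m : ℤ) (t : ℝ), HasDerivAt (C m) (Cd m t) t)
    (hCdd : ∀ (m : ℤ) (t : ℝ), HasDerivAt (Cd m) (Cdd m t) t) :
    ∀ m : ℤ, 1 ≤ m → m ≤ (N : ℤ) → ∀ t : ℝ,
      Cdd m t
        + (-2 * ((N : ℂ) - (m : ℂ) + 1) * a) * Cd (m - 1) t
        + (2 * ((m : ℂ) - 1) * b - γ) * Cd m t
        + (2 * (m : ℂ) + 1) * Cd (m + 1) t
        + (((N : ℂ) - (m : ℂ) + 2) * ((N : ℂ) - (m : ℂ) + 1) * a ^ 2) * C (m - 2) t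
        + (((N : ℂ) - (m : ℂ) + 1) * (-(2 * (m : ℂ) - 3) * b + γ) * a) * C (m - 1) t
        + (-(m : ℂ) * (2 * (N : ℂ) - 2 * (m : ℂ) + 1) * a
            + (m : ℂ) * ((m : ℂ) - 2) * b ^ 2 - (m : ℂ) * b * γ) * C m t
        + (2 * ((m : ℂ) ^ 2 - 1) * b - ((m : ℂ) + 1) * γ) * C (m + 1) t
        + ((m : ℂ) * ((m : ℂ) + 2)) * C (m + 2) t
      = 2 * C 1 t * Cd m t
        - 2 * ((N : ℂ) - (m : ℂ) + 1) * a * C 1 t * C (m - 1) t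
        + (Cd 1 t - (C 1 t) ^ 2 + 2 * ((m : ℂ) - 1) * b * C 1 t - γ * C 1 t) * C m t
        + (2 * (m : ℂ) + 1) * C 1 t * C (m + 1) t := by
  intro m _ _ t
  exact sub_eq_zero.1 (goldfish_stmt16_general hα hβ hz hzd hsep hNewton hC hCd hCdd m t)
end

section
/- Let c be a complex number, ω a nonzero real number, and τ(t) = (exp(iωt) − 1)/(iω). Let Ω ⊆ ℂ be an open set containing {τ(t) : t ∈ ℝ} and let γ₀, γ₁,…,γ_N : Ω → ℂ be twice complex-differentiable with γ₀ ≡ 1 and the convention γ_m ≡ 0 for m > N, satisfying on Ω, for m = 1,…,N, the base coefficient system γ_m'' = 2c·γ₁·γ_m' − [2c(m−1)+3]·γ_{m+1}' + [(3−2c)·γ₁' − γ₁² + 2(1−c²)·γ₂]·γ_m + (2c²m+1)·γ₁·γ_{m+1} − (m+2)·[c²(m−1)+1]·γ_{m+2}, where primes denote complex derivatives. Define c̃_m(t) = exp(imωt)·γ_m(τ(t)) for real t. Then each c̃_m is twice differentiable in t and satisfies, for m = 1,…,N and all t, the isochronous system: c̃_m'' = [(2m+1)·iω + 2c·c̃₁]·c̃_m'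 − [2c(m−1)+3]·c̃_{m+1}' + {m(m+1)·ω² − [2c(m−1)+3]·iω·c̃₁ + (3−2c)·c̃₁' − c̃₁² + 2(1−c²)·c̃₂}·c̃_m + {(m+1)·[2c(m−1)+3]·iω + (2c²m+1)·c̃₁}·c̃_{m+1} − (m+2)·[c²(m−1)+1]·c̃_{m+2}, where now primes denote derivatives with respect to the real time t and c̃_m ≡ 0 for m > N. -/
/-!
Write `E = exp (iωt)`. Since `τ' = E` and `E' = iωE`, the coefficient `c̃_m = E ^ m * γ_m(τ)`
satisfies `c̃_m' = i m ω c̃_m + E ^ (m + 1) * γ_m'(τ)` and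
`c̃_m'' = (2m + 1) i ω c̃_m' + m (m + 1) ω² c̃_m + E ^ (m + 2) * γ_m''(τ)`.
The base system is weighted homogeneous: if `γ_k` has weight `k` and `γ_k'` has weight `k + 1`,
every term of its `m`-th equation has weight `m + 2`. Hence the factor `E ^ (m + 2)` is absorbed by
replacing `γ_k` with `c̃_k` and `γ_k'` with `c̃_k' - i k ω c̃_k`, and the equation becomes
autonomous in `t`.
-/

/-- The right-hand side of the `m`-th equation `γ_m'' = …` of the base coefficient system, as a
function of the values `γ` of the coefficients and `γ'` of their first derivatives. -/
def baseField (c : ℂ) (γ γ' : ℕ → ℂ) (m : ℕ) : ℂ :=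
  2 * c * γ 1 * γ' m
    - (2 * c * ((m : ℂ) - 1) + 3) * γ' (m + 1)
    + ((3 - 2 * c) * γ' 1 - (γ 1) ^ 2 + 2 * (1 - c ^ 2) * γ 2) * γ m
    + (2 * c ^ 2 * (m : ℂ) + 1) * γ 1 * γ (m + 1)
    - ((m : ℂ) + 2) * (c ^ 2 * ((m : ℂ) - 1) + 1) * γ (m + 2)

/-- The right-hand side of the `m`-th equation `c̃_m'' = …` of the isochronous coefficient system,
as a function of the values `u` of the coefficients and `v` of their first derivatives in time.
The frequency `ω` may be complex. -/
def isochronousField (c ω : ℂ) (u v : ℕ → ℂ) (m : ℕ) : ℂ :=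
  ((2 * (m : ℂ) + 1) * Complex.I * ω + 2 * c * u 1) * v m
    - (2 * c * ((m : ℂ) - 1) + 3) * v (m + 1)
    + ((m : ℂ) * ((m : ℂ) + 1) * ω ^ 2
        - (2 * c * ((m : ℂ) - 1) + 3) * Complex.I * ω * u 1
        + (3 - 2 * c) * v 1 - (u 1) ^ 2 + 2 * (1 - c ^ 2) * u 2) * u m
    + (((m : ℂ) + 1) * (2 * c * ((m : ℂ) - 1) + 3) * Complex.I * ω
        + (2 * c ^ 2 * (m : ℂ) + 1) * u 1) * u (m + 1)
    - ((m : ℂ) + 2) * (c ^ 2 * ((m : ℂ) - 1) + 1) * u (m + 2)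

lemma baseField_weight_mul (c e : ℂ) (γ γ' : ℕ → ℂ) (m : ℕ) :
    baseField c (fun k => e ^ k * γ k) (fun k => e ^ (k + 1) * γ' k) m =
      e ^ (m + 2) * baseField c γ γ' m := by
  simp only [baseField]
  ring

lemma isochronousField_eq_add_baseField (c ω : ℂ) (u v : ℕ → ℂ) (m : ℕ) :
    isochronousField c ω u v m =
      (2 * m + 1) * (Complex.I * ω) * v m + m * (m + 1) * ω ^ 2 * u m
        + baseField c u (fun k => v k - Complex.I * ω * k * u k) m := by
  simp only [isochronousField, baseField]
  push_cast
  ring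

section WeightedCurve

variable {𝕜 𝕂 : Type*} [NontriviallyNormedField 𝕜] [NontriviallyNormedField 𝕂]
  [NormedAlgebra 𝕜 𝕂] {E τ : 𝕜 → 𝕂} {a : 𝕂} {t : 𝕜}

lemma hasDerivAt_pow_mul_comp (hE : HasDerivAt E (a * E t) t) (hτ : HasDerivAt τ (E t) t)
    {f : 𝕂 → 𝕂} {f' : 𝕂} (hf : HasDerivAt f f' (τ t)) (k : ℕ) :
    HasDerivAt (fun s => E s ^ k * f (τ s))
      (a * k * (E t ^ k * f (τ t)) + E t ^ (k + 1) * f') t := by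
  refine ((hE.fun_pow k).mul (hf.comp t hτ)).congr_deriv ?_
  rcases k with _ | k
  · simp [mul_comm]
  · simp only [Nat.add_sub_cancel, Function.comp_apply]
    ring

lemma hasDerivAt_deriv_pow_mul_comp (hE : HasDerivAt E (a * E t) t)
    (hτ : HasDerivAt τ (E t) t) {f f' : 𝕂 → 𝕂} {f'' : 𝕂} (hf : HasDerivAt f (f' (τ t)) (τ t))
    (hf' : HasDerivAt f' f'' (τ t)) (k : ℕ) :
    HasDerivAt (fun s => a * k * (E s ^ k * f (τ s)) + E s ^ (k + 1) * f' (τ s))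
      ((2 * k + 1) * a * (a * k * (E t ^ k * f (τ t)) + E t ^ (k + 1) * f' (τ t))
        - k * (k + 1) * a ^ 2 * (E t ^ k * f (τ t)) + E t ^ (k + 2) * f'') t := by
  have hfirst := (hasDerivAt_pow_mul_comp hE hτ hf k).const_mul (a * k)
  have hsecond := hasDerivAt_pow_mul_comp hE hτ hf' (k + 1)
  refine (hfirst.add hsecond).congr_deriv ?_
  push_cast
  ring

end WeightedCurve

lemma hasDerivAt_isochronousField {c ω : ℂ} {E τ : ℝ → ℂ} {t : ℝ}
    (hE : HasDerivAt E (Complex.I * ω * E t) t) (hτ : HasDerivAt τ (E t) t)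
    {g gd : ℕ → ℂ → ℂ} {m : ℕ} (hg : HasDerivAt (g m) (gd m (τ t)) (τ t))
    (hgd : HasDerivAt (gd m) (baseField c (fun k => g k (τ t)) (fun k => gd k (τ t)) m) (τ t)) :
    HasDerivAt (fun s => Complex.I * ω * m * (E s ^ m * g m (τ s)) + E s ^ (m + 1) * gd m (τ s))
      (isochronousField c ω (fun k => E t ^ k * g k (τ t))
        (fun k => Complex.I * ω * k * (E t ^ k * g k (τ t)) + E t ^ (k + 1) * gd k (τ t)) m) t := by
  refine (hasDerivAt_deriv_pow_mul_comp hE hτ hg hgd m).congr_deriv ?_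
  simp only [isochronousField_eq_add_baseField, add_sub_cancel_left, baseField_weight_mul, mul_pow,
    Complex.I_sq]
  ring

lemma hasDerivAt_cexp_const_mul_ofReal (a : ℂ) (t : ℝ) :
    HasDerivAt (fun s : ℝ => Complex.exp (a * s)) (a * Complex.exp (a * t)) t := by
  simpa [mul_comm] using ((hasDerivAt_id (t : ℂ)).const_mul a).cexp.comp_ofReal

lemma hasDerivAt_cexp_sub_one_div {a : ℂ} (ha : a ≠ 0) (t : ℝ) :
    HasDerivAt (fun s : ℝ => (Complex.exp (a * s) - 1) / a) (Complex.exp (a * t)) t := by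
  simpa [ha] using ((hasDerivAt_cexp_const_mul_ofReal a t).sub_const 1).div_const a

theorem goldfish_stmt18_general {c ω : ℂ} (hω : ω ≠ 0) {τ : ℝ → ℂ}
    (hτ : ∀ t : ℝ, τ t = (Complex.exp (Complex.I * ω * t) - 1) / (Complex.I * ω))
    {g gd : ℕ → ℂ → ℂ} (hg : ∀ m t, HasDerivAt (g m) (gd m (τ t)) (τ t)) {S : Set ℕ}
    (hgd : ∀ m ∈ S, ∀ t,
      HasDerivAt (gd m) (baseField c (fun k => g k (τ t)) (fun k => gd k (τ t)) m) (τ t))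
    {ct : ℕ → ℝ → ℂ} (hct : ∀ m t, ct m t = Complex.exp (Complex.I * m * ω * t) * g m (τ t)) :
    ∃ cd : ℕ → ℝ → ℂ, (∀ m t, HasDerivAt (ct m) (cd m t) t) ∧
      ∀ m ∈ S, ∀ t,
        HasDerivAt (cd m) (isochronousField c ω (fun k => ct k t) (fun k => cd k t) m) t := by
  let E : ℝ → ℂ := fun t => Complex.exp (Complex.I * ω * t)
  have hE (t : ℝ) : HasDerivAt E (Complex.I * ω * E t) t := hasDerivAt_cexp_const_mul_ofReal _ t
  have hτ' (t : ℝ) : HasDerivAt τ (E t) t :=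
    funext hτ ▸ hasDerivAt_cexp_sub_one_div (mul_ne_zero Complex.I_ne_zero hω) t
  obtain rfl : ct = fun m t => E t ^ m * g m (τ t) := by
    ext m t
    rw [hct, ← Complex.exp_nat_mul]
    ring_nf
  exact ⟨fun m t => Complex.I * ω * m * (E t ^ m * g m (τ t)) + E t ^ (m + 1) * gd m (τ t),
    fun m t => hasDerivAt_pow_mul_comp (hE t) (hτ' t) (hg m t) m,
    fun m hm t => hasDerivAt_isochronousField (hE t) (hτ' t) (hg m t) (hgd m hm t)⟩

/-- "the trick" for the coefficients: If `γ₀ ≡ 1, γ₁,…,γ_N` are twice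
complex-differentiable on an open set `Ω` containing the curve `τ(t) = (e^{iωt} − 1)/(iω)`
and satisfy the base coefficient system on `Ω`, then `c̃_m(t) = e^{imωt}·γ_m(τ(t))` is twice
differentiable in `t` and satisfies the isochronous coefficient system. -/
theorem goldfish_stmt18 (N : ℕ) (hN : 0 < N) (c : ℂ) (ω : ℝ) (hω : ω ≠ 0)
    (τ : ℝ → ℂ)
    (hτ : ∀ t : ℝ, τ t = (Complex.exp (Complex.I * (ω : ℂ) * (t : ℂ)) - 1)
      / (Complex.I * (ω : ℂ)))
    (Ω : Set ℂ) (hΩopen : IsOpen Ω) (hΩτ : ∀ t : ℝ, τ t ∈ Ω)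
    (g gd gdd : ℕ → ℂ → ℂ)
    (hg0 : ∀ w : ℂ, g 0 w = 1)
    (hgtop : ∀ m : ℕ, N < m → ∀ w : ℂ, g m w = 0)
    (hg : ∀ m : ℕ, ∀ w ∈ Ω, HasDerivAt (g m) (gd m w) w)
    (hgd : ∀ m : ℕ, ∀ w ∈ Ω, HasDerivAt (gd m) (gdd m w) w)
    (hbase : ∀ m : ℕ, 1 ≤ m → m ≤ N → ∀ w ∈ Ω, gdd m w =
      2 * c * g 1 w * gd m w
        - (2 * c * ((m : ℂ) - 1) + 3) * gd (m + 1) w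
        + ((3 - 2 * c) * gd 1 w - (g 1 w) ^ 2 + 2 * (1 - c ^ 2) * g 2 w) * g m w
        + (2 * c ^ 2 * (m : ℂ) + 1) * g 1 w * g (m + 1) w
        - ((m : ℂ) + 2) * (c ^ 2 * ((m : ℂ) - 1) + 1) * g (m + 2) w)
    (ct : ℕ → ℝ → ℂ)
    (hct : ∀ m : ℕ, ∀ t : ℝ, ct m t =
      Complex.exp (Complex.I * (m : ℂ) * (ω : ℂ) * (t : ℂ)) * g m (τ t)) :
    ∃ cd : ℕ → ℝ → ℂ,
      (∀ m : ℕ, ∀ t : ℝ, HasDerivAt (ct m) (cd m t) t) ∧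
      (∀ m : ℕ, 1 ≤ m → m ≤ N → ∀ t : ℝ, HasDerivAt (cd m)
        (((2 * (m : ℂ) + 1) * Complex.I * (ω : ℂ) + 2 * c * ct 1 t) * cd m t
          - (2 * c * ((m : ℂ) - 1) + 3) * cd (m + 1) t
          + ((m : ℂ) * ((m : ℂ) + 1) * (ω : ℂ) ^ 2
              - (2 * c * ((m : ℂ) - 1) + 3) * Complex.I * (ω : ℂ) * ct 1 t
              + (3 - 2 * c) * cd 1 t - (ct 1 t) ^ 2 + 2 * (1 - c ^ 2) * ct 2 t) * ct m t
          + (((m : ℂ) + 1) * (2 * c * ((m : ℂ) - 1) + 3) * Complex.I * (ω : ℂ)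
              + (2 * c ^ 2 * (m : ℂ) + 1) * ct 1 t) * ct (m + 1) t
          - ((m : ℂ) + 2) * (c ^ 2 * ((m : ℂ) - 1) + 1) * ct (m + 2) t) t) := by
  obtain ⟨cd, hcd, hcdd⟩ := goldfish_stmt18_general (Complex.ofReal_ne_zero.mpr hω) hτ
    (fun m t => hg m _ (hΩτ t)) (S := Set.Icc 1 N)
    (fun m hm t => (hgd m _ (hΩτ t)).congr_deriv (hbase m hm.1 hm.2 _ (hΩτ t))) hct
  exact ⟨cd, hcd, fun m hm hmN => hcdd m ⟨hm, hmN⟩⟩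
end

section
/- Let a, b, γ be complex numbers, set α = a·(γ + b) and β = −a + b·(γ + b), and let z₁,…,z_N : ℝ → ℂ be twice differentiable with pairwise distinct values for every t, satisfying the model (i) equations z_n'' = −3·z_n'·z_n + γ·z_n' − z_n³ + γ·z_n² + β·z_n + α + Σ_{ℓ≠n} 2·(z_n' + a + b·z_n + z_n²)·(z_ℓ' + a + b·z_ℓ + z_ℓ²)/(z_n − z_ℓ). Define ψ(z,t) = Π_{n=1}^N (z − z_n(t)) for z ∈ ℂ and t ∈ ℝ, and c₁(t) = −Σ_{n=1}^N z_n(t). Then ψ satisfies, for all z and t, the partial differential equation ψ_tt + (η₀ + η₁·z + η₂·z²)·ψ_zt + (θ₀ + θ₁·z)·ψ_t + (α₀ + α₁·z + α₂·z² + α₃·z³ + α₄·z⁴)·ψ_zz + (β₀ + β₁·z + β₂·z² + β₃·z³)·ψ_z + (γ₀ + γ₁·z + γ₂·z²)·ψ = 0, where subscripts z and t denote partial derivatives and the coefficients are η₀ = −2a, η₁ = −2b, η₂ = −2; θ₀ = −2·c₁ + 2(N−1)·b − γ, θ₁ = 2N−1; α₀ = a², α₁ = 2ab, α₂ = 2a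 + b², α₃ = 2b, α₄ = 1; β₀ = [2·c₁ − (2N−3)·b + γ]·a, β₁ = 2b·c₁ − (2N−3)·(a + b²) + b·γ, β₂ = 2·c₁ − 2(2N−3)·b + γ, β₃ = −(2N−3); γ₀ = −c₁' + c₁² − 2(N−1)·b·c₁ + γ·c₁ − N·a + N(N−2)·b² − N·b·γ, γ₁ = −(2N−1)·c₁ + 2N(N−2)·b − N·γ, γ₂ = N(N−2). -/
open Finset

/-!
With `Q = a + b w + w²`, `K = N (w + b) - c₁` and the first-order operator `L = ∂_t - Q ∂_w`, the
equation is the expansion of `(L + K - γ - 2 b - w) (L + K) ψ = 0`.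

Put `v_n = z_n' + Q(z_n)` and `E_n = ∏_{k ≠ n} (w - z_k)`. Since
`z_n' + Q(w) = v_n + (w - z_n) (w + z_n + b)` and `(w - z_n) E_n = ψ`, the inner factor gives
`(L + K) ψ = -∑ v_n E_n`. The equations of motion say exactly that
`v_n' = (γ + b - z_n) v_n + ∑_{m ≠ n} 2 v_n v_m / (z_n - z_m)`. Applying `L` to `∑ v_n E_n`, the
two-body terms cancel, because `∏_{k ≠ n, m} (w - z_k) = (E_n - E_m) / (z_n - z_m)`, and what
remains is `L ∑ v_n E_n = (γ + 2 b + w - K) ∑ v_n E_n`.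

Writing the second-order derivatives of `ψ` as sums over pairs avoids any division by `ψ`, so its
roots need no separate treatment.
-/

section Algebra

variable {ι R : Type*} [Fintype ι] [DecidableEq ι]

/-- The product of the `w - x k` with the factor `k = n` omitted, that is, up to sign the
derivative of `∏ k, (w - x k)` with respect to `x n`. -/
def prodSubErase [CommRing R] (x : ι → R) (w : R) (n : ι) : R :=
  ∏ k ∈ univ.erase n, (w - x k)

/-- The product of the `w - x k` with the two factors `k = n, m` omitted, for second derivatives
of `∏ k, (w - x k)`. It is set to zero for `n = m`, so that sums over pairs `n ≠ m` can be written
as full double sums. -/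
def prodSubErasePair [CommRing R] (x : ι → R) (w : R) (n m : ι) : R :=
  if n = m then 0 else ∏ k ∈ (univ.erase n).erase m, (w - x k)

section CommRing

variable [CommRing R] (x : ι → R) (w : R)

lemma sub_mul_prodSubErase (n : ι) : (w - x n) * prodSubErase x w n = ∏ k, (w - x k) :=
  mul_prod_erase univ (fun k => w - x k) (mem_univ n)

lemma sub_mul_prodSubErasePair {n m : ι} (h : n ≠ m) :
    (w - x m) * prodSubErasePair x w n m = prodSubErase x w n := by
  rw [prodSubErasePair, if_neg h]
  exact mul_prod_erase (univ.erase n) (fun k => w - x k) (by simp [h.symm])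

@[simp]
lemma prodSubErasePair_self (n : ι) : prodSubErasePair x w n n = 0 :=
  if_pos rfl

lemma prodSubErasePair_comm (n m : ι) : prodSubErasePair x w n m = prodSubErasePair x w m n := by
  simp only [prodSubErasePair, erase_right_comm (a := n), eq_comm (a := n)]

lemma sub_mul_prodSubErasePair_eq_sub (n m : ι) :
    (x n - x m) * prodSubErasePair x w n m = prodSubErase x w n - prodSubErase x w m := by
  obtain rfl | h := eq_or_ne n m
  · simp
  · rw [← sub_mul_prodSubErasePair x w h, ← sub_mul_prodSubErasePair x w h.symm,
      prodSubErasePair_comm x w m n]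
    ring

lemma sum_add_sub_mul_prodSubErase (v X : ι → R) :
    ∑ n, (v n + (w - x n) * X n) * prodSubErase x w n
      = ∑ n, v n * prodSubErase x w n + (∑ n, X n) * ∏ k, (w - x k) := by
  rw [sum_mul, ← sum_add_distrib]
  refine sum_congr rfl fun n _ => ?_
  rw [← sub_mul_prodSubErase x w n]
  ring

lemma sum_add_sub_mul_prodSubErasePair (v X : ι → R) (n : ι) :
    ∑ m, (v m + (w - x m) * X m) * prodSubErasePair x w n m
      = ∑ m, v m * prodSubErasePair x w n m + (∑ m, X m - X n) * prodSubErase x w n := by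
  have completed : ∑ m, X m * ((w - x m) * prodSubErasePair x w n m)
      = (∑ m, X m - X n) * prodSubErase x w n := by
    rw [← sum_erase_eq_sub (mem_univ n), sum_mul, ← sum_erase univ (a := n) (by simp)]
    exact sum_congr rfl fun m hm => by
      rw [sub_mul_prodSubErasePair x w (ne_of_mem_erase hm).symm]
  rw [← completed, ← sum_add_distrib]
  exact sum_congr rfl fun m _ => by ring

lemma sum_sum_mul_prodSubErasePair_comm (f : ι → ι → R) :
    ∑ n, ∑ m, f n m * prodSubErasePair x w n m = ∑ n, ∑ m, f m n * prodSubErasePair x w n m := by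
  rw [sum_comm]
  simp only [prodSubErasePair_comm x w]

lemma sum_sum_add_sub_mul_prodSubErasePair (v X : ι → R) :
    ∑ n, ∑ m, (v n + (w - x n) * X n) * (v m + (w - x m) * X m) * prodSubErasePair x w n m
      = ∑ n, ∑ m, v n * v m * prodSubErasePair x w n m
        + ∑ n, (v n + (v n + (w - x n) * X n)) * (∑ m, X m - X n) * prodSubErase x w n := by
  have expand (c : ι → R) :
      ∑ n, ∑ m, c n * (v m + (w - x m) * X m) * prodSubErasePair x w n m
        = ∑ n, ∑ m, c n * v m * prodSubErasePair x w n m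
          + ∑ n, c n * (∑ m, X m - X n) * prodSubErase x w n := by
    simp only [mul_assoc, ← mul_sum, ← sum_add_distrib, ← mul_add]
    simp only [← sum_add_sub_mul_prodSubErasePair]
  have swap : ∑ n, ∑ m, (v n + (w - x n) * X n) * v m * prodSubErasePair x w n m
      = ∑ n, ∑ m, v n * (v m + (w - x m) * X m) * prodSubErasePair x w n m := by
    rw [sum_sum_mul_prodSubErasePair_comm]
    simp only [mul_comm (v _)]
  rw [expand, swap, expand, add_assoc, ← sum_add_distrib]
  exact congrArg _ (sum_congr rfl fun n _ => by ring)

lemma sum_sum_add_mul_add_mul_prodSubErasePair (y : ι → R) (q : R) :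
    ∑ n, ∑ m, (y n + q) * (y m + q) * prodSubErasePair x w n m
      = ∑ n, ∑ m, y n * y m * prodSubErasePair x w n m
        + 2 * q * ∑ n, ∑ m, y n * prodSubErasePair x w n m
        + q ^ 2 * ∑ n, ∑ m, prodSubErasePair x w n m := by
  rw [two_mul, add_mul]
  nth_rewrite 2 [sum_sum_mul_prodSubErasePair_comm x w fun n _ => y n]
  simp only [mul_sum, ← sum_add_distrib]
  exact sum_congr rfl fun n _ => sum_congr rfl fun m _ => by ring

end CommRing

section Field

variable [Field R] {x : ι → R} (w : R)

lemma sum_sum_mul_mul_prodSubErasePair (hx : Function.Injective x) (v : ι → R) :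
    ∑ n, ∑ m, v n * v m * prodSubErasePair x w n m
      = ∑ n, (∑ m ∈ univ.erase n, 2 * v n * v m / (x n - x m)) * prodSubErase x w n := by
  have partial_fractions (n m : ι) : v n * v m * prodSubErasePair x w n m
      = v n * v m / (x n - x m) * prodSubErase x w n
        + v m * v n / (x m - x n) * prodSubErase x w m := by
    obtain rfl | h := eq_or_ne n m
    · simp
    · have hsub : x n - x m ≠ 0 := sub_ne_zero.2 (hx.ne h)
      rw [← neg_sub (x n) (x m)]
      field_simp
      linear_combination v n * v m * sub_mul_prodSubErasePair_eq_sub x w n m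
  simp only [partial_fractions, sum_add_distrib]
  rw [sum_comm (f := fun n m => v m * v n / (x m - x n) * prodSubErase x w m),
    ← sum_add_distrib]
  refine sum_congr rfl fun n _ => ?_
  rw [sum_erase univ (by simp), sum_mul, ← sum_add_distrib]
  exact sum_congr rfl fun m _ => by ring

/-- The relation `L² ψ = -(K - γ - 2 b - w) (L + K) ψ - K L ψ - (L K) ψ` at a fixed time, where `x`,
`y`, `f` are the positions, velocities and accelerations, `K = ∑ n, (w + x n + b)`, and the
left-hand side is `L² ψ - Q Q' ∂_w ψ`. -/
lemma sum_sum_prodSubErasePair_of_motion (hx : Function.Injective x) (a b γ : R) (y f : ι → R)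
    (hf : ∀ n, f n = -3 * y n * x n + γ * y n - x n ^ 3 + γ * x n ^ 2
        + (-a + b * (γ + b)) * x n + a * (γ + b)
        + ∑ m ∈ univ.erase n, 2 * (y n + a + b * x n + x n ^ 2)
            * (y m + a + b * x m + x m ^ 2) / (x n - x m)) :
    -∑ n, f n * prodSubErase x w n
        + ∑ n, ∑ m, (y n + (a + b * w + w ^ 2)) * (y m + (a + b * w + w ^ 2))
            * prodSubErasePair x w n m
      = (∑ n, (w + x n + b) - γ - 2 * b - w)
            * ∑ n, (y n + a + b * x n + x n ^ 2) * prodSubErase x w n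
        + (∑ n, (w + x n + b)) * ∑ n, (y n + (a + b * w + w ^ 2)) * prodSubErase x w n
        - (a + b * w + w ^ 2) * (b + 2 * w) * ∑ n, prodSubErase x w n
        - (∑ n, (y n - (a + b * w + w ^ 2))) * ∏ k, (w - x k) := by
  have shift (n : ι) : y n + (a + b * w + w ^ 2)
      = (y n + a + b * x n + x n ^ 2) + (w - x n) * (w + x n + b) := by ring
  simp only [shift]
  rw [sum_sum_add_sub_mul_prodSubErasePair, sum_sum_mul_mul_prodSubErasePair w hx,
    sum_mul _ _ (∏ k, _)]
  -- With `ψ = (w - x n) E n`, the two sides agree term by term in `n`.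
  simp only [← sum_neg_distrib, mul_sum, ← sum_add_distrib, ← sum_sub_distrib]
  refine sum_congr rfl fun n _ => ?_
  rw [hf n, ← sub_mul_prodSubErase x w n]
  ring

end Field

end Algebra

section Calculus

variable {ι 𝕜 𝕂 : Type*} [Fintype ι] [DecidableEq ι] [NontriviallyNormedField 𝕜]
  [NontriviallyNormedField 𝕂] [NormedAlgebra 𝕜 𝕂]
variable {x : ι → 𝕜 → 𝕂} {u : 𝕜 → 𝕂} {d : ι → 𝕂} {t : 𝕜}

lemma hasDerivAt_prod_sub (hd : ∀ k, HasDerivAt (fun s => u s - x k s) (d k) t) :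
    HasDerivAt (fun s => ∏ k, (u s - x k s))
      (∑ n, d n * prodSubErase (fun k => x k t) (u t) n) t := by
  simpa only [smul_eq_mul, mul_comm, prodSubErase] using
    HasDerivAt.fun_finsetProd (u := univ) fun k _ => hd k

lemma hasDerivAt_prodSubErase (hd : ∀ k, HasDerivAt (fun s => u s - x k s) (d k) t) (n : ι) :
    HasDerivAt (fun s => prodSubErase (fun k => x k s) (u s) n)
      (∑ m, d m * prodSubErasePair (fun k => x k t) (u t) n m) t := by
  refine (HasDerivAt.fun_finsetProd fun k _ => hd k).congr_deriv ?_
  rw [← sum_erase univ (a := n) (by simp)]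
  refine sum_congr rfl fun m hm => ?_
  rw [prodSubErasePair, if_neg (ne_of_mem_erase hm).symm, smul_eq_mul, mul_comm]

lemma hasDerivAt_sum_mul_prodSubErase {c : ι → 𝕜 → 𝕂} {c' : ι → 𝕂}
    (hc : ∀ n, HasDerivAt (c n) (c' n) t)
    (hd : ∀ k, HasDerivAt (fun s => u s - x k s) (d k) t) :
    HasDerivAt (fun s => ∑ n, c n s * prodSubErase (fun k => x k s) (u s) n)
      (∑ n, c' n * prodSubErase (fun k => x k t) (u t) n
        + ∑ n, ∑ m, c n t * d m * prodSubErasePair (fun k => x k t) (u t) n m) t := by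
  refine (HasDerivAt.fun_sum fun n _ =>
    (hc n).fun_mul (hasDerivAt_prodSubErase hd n)).congr_deriv ?_
  simp only [sum_add_distrib, mul_sum, mul_assoc]

variable {z zd : ι → 𝕜 → 𝕂}

lemma deriv_prod_sub_time (hz : ∀ n, HasDerivAt (z n) (zd n t) t) (w : 𝕂) :
    deriv (fun s => ∏ n, (w - z n s)) t
      = -∑ n, zd n t * prodSubErase (fun k => z k t) w n := by
  simpa only [neg_mul, sum_neg_distrib] using
    (hasDerivAt_prod_sub fun k => (hz k).const_sub w).deriv

lemma deriv_prod_sub_space (x : ι → 𝕂) (w : 𝕂) :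
    deriv (fun w => ∏ n, (w - x n)) w = ∑ n, prodSubErase x w n := by
  simpa only [one_mul] using
    (hasDerivAt_prod_sub fun k => (hasDerivAt_id' w).sub_const (x k)).deriv

lemma deriv_deriv_prod_sub_time {zdd : ι → 𝕂}
    (hz : ∀ᶠ s in nhds t, ∀ n, HasDerivAt (z n) (zd n s) s)
    (hzd : ∀ n, HasDerivAt (zd n) (zdd n) t) (w : 𝕂) :
    deriv (deriv fun s => ∏ n, (w - z n s)) t
      = -∑ n, zdd n * prodSubErase (fun k => z k t) w n
        + ∑ n, ∑ m, zd n t * zd m t * prodSubErasePair (fun k => z k t) w n m := by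
  rw [Filter.EventuallyEq.deriv_eq (hz.mono fun s hs => deriv_prod_sub_time hs w),
    (hasDerivAt_sum_mul_prodSubErase hzd fun k =>
      (hz.self_of_nhds k).const_sub w).fun_neg.deriv]
  simp only [mul_neg, neg_mul, sum_neg_distrib, neg_add, neg_neg]

lemma deriv_space_deriv_time_prod_sub (hz : ∀ n, HasDerivAt (z n) (zd n t) t) (w : 𝕂) :
    deriv (fun w => deriv (fun s => ∏ n, (w - z n s)) t) w
      = -∑ n, ∑ m, zd n t * prodSubErasePair (fun k => z k t) w n m := by
  simp only [deriv_prod_sub_time hz]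
  simpa only [zero_mul, sum_const_zero, zero_add, mul_one] using
    (hasDerivAt_sum_mul_prodSubErase (fun n => hasDerivAt_const w (zd n t)) fun k =>
      (hasDerivAt_id' w).sub_const (z k t)).fun_neg.deriv

lemma deriv_deriv_prod_sub_space (x : ι → 𝕂) (w : 𝕂) :
    deriv (fun w => deriv (fun w => ∏ n, (w - x n)) w) w
      = ∑ n, ∑ m, prodSubErasePair x w n m := by
  simp only [deriv_prod_sub_space]
  simpa only [one_mul] using
    (HasDerivAt.fun_sum fun n _ =>
      hasDerivAt_prodSubErase (fun k => (hasDerivAt_id' w).sub_const (x k)) n).deriv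

end Calculus

/-- The equation in the form `(L + K - γ - 2 b - w) (L + K) ψ = 0`, expanded with
`L = ∂_t - Q ∂_w`, at a single time `t` near which the motion is defined. -/
theorem goldfish_stmt19_general {ι 𝕜 𝕂 : Type*} [Fintype ι] [DecidableEq ι]
    [NontriviallyNormedField 𝕜] [NontriviallyNormedField 𝕂] [NormedAlgebra 𝕜 𝕂]
    (a b γ : 𝕂) (z zd : ι → 𝕜 → 𝕂) (zdd : ι → 𝕂) (t : 𝕜)
    (hz : ∀ᶠ s in nhds t, ∀ n, HasDerivAt (z n) (zd n s) s)
    (hzd : ∀ n, HasDerivAt (zd n) (zdd n) t)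
    (hsep : Function.Injective fun n => z n t)
    (hNewton : ∀ n, zdd n =
      -3 * zd n t * z n t + γ * zd n t - z n t ^ 3 + γ * z n t ^ 2
        + (-a + b * (γ + b)) * z n t + a * (γ + b)
        + ∑ ℓ ∈ univ.erase n, 2 * (zd n t + a + b * z n t + z n t ^ 2)
            * (zd ℓ t + a + b * z ℓ t + z ℓ t ^ 2) / (z n t - z ℓ t))
    (ψ : 𝕂 → 𝕜 → 𝕂) (hψ : ∀ w s, ψ w s = ∏ n, (w - z n s))
    (w Q K : 𝕂) (hQ : Q = a + b * w + w ^ 2)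
    (hK : K = Fintype.card ι * (w + b) + ∑ n, z n t) :
    deriv (deriv (ψ w)) t
      - 2 * Q * deriv (fun w' => deriv (ψ w') t) w
      + (2 * K - γ - 2 * b - w) * deriv (ψ w) t
      + Q ^ 2 * deriv (fun w' => deriv (fun w'' => ψ w'' t) w') w
      + Q * (b + 2 * w - (2 * K - γ - 2 * b - w)) * deriv (fun w' => ψ w' t) w
      + (∑ n, zd n t - Fintype.card ι * Q + K * (K - γ - 2 * b - w)) * ψ w t = 0 := by
  obtain rfl : ψ = fun w s => ∏ n, (w - z n s) := funext₂ hψ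
  have hzt := hz.self_of_nhds
  rw [deriv_deriv_prod_sub_time hz hzd, deriv_space_deriv_time_prod_sub hzt,
    deriv_prod_sub_time hzt, deriv_deriv_prod_sub_space, deriv_prod_sub_space]
  have hsumK : ∑ n, (w + z n t + b) = K := by
    simp only [hK, sum_add_distrib, sum_const, card_univ, nsmul_eq_mul]
    ring
  have hsumQ : ∑ n, (zd n t - Q) = ∑ n, zd n t - Fintype.card ι * Q := by
    simp only [sum_sub_distrib, sum_const, card_univ, nsmul_eq_mul]
  have second_order := sum_sum_prodSubErasePair_of_motion w hsep a b γ (zd · t) zdd hNewton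
  have first_order := sum_add_sub_mul_prodSubErase (z · t) w
    (fun n => zd n t + a + b * z n t + z n t ^ 2) (fun n => w + z n t + b)
  have shift (n : ι) : (zd n t + a + b * z n t + z n t ^ 2) + (w - z n t) * (w + z n t + b)
      = zd n t + Q := by rw [hQ]; ring
  have split : ∑ n, (zd n t + Q) * prodSubErase (z · t) w n
      = ∑ n, zd n t * prodSubErase (z · t) w n + Q * ∑ n, prodSubErase (z · t) w n := by
    simp only [add_mul, sum_add_distrib, mul_sum]
  simp only [shift, split, hsumK] at first_order
  simp only [← hQ, split, sum_sum_add_mul_add_mul_prodSubErasePair, hsumK, hsumQ] at second_order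
  linear_combination second_order - (K - γ - 2 * b - w) * first_order

/-- For solutions of model (i), the monic polynomial
`ψ(z,t) = Π_{n=1}^N (z − z_n(t))` satisfies the (functional) partial differential equation
(Eqpsi) with the stated coefficients, where `c₁(t) = −Σ_n z_n(t)`. -/
theorem goldfish_stmt19 (N : ℕ) (hN : 0 < N) (a b γ α β : ℂ)
    (hα : α = a * (γ + b)) (hβ : β = -a + b * (γ + b))
    (z zd zdd : Fin N → ℝ → ℂ)
    (hz : ∀ n, ∀ t : ℝ, HasDerivAt (z n) (zd n t) t)
    (hzd : ∀ n, ∀ t : ℝ, HasDerivAt (zd n) (zdd n t) t)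
    (hsep : ∀ t : ℝ, ∀ n m : Fin N, n ≠ m → z n t ≠ z m t)
    (hNewton : ∀ n, ∀ t : ℝ, zdd n t =
      -3 * zd n t * z n t + γ * zd n t - (z n t) ^ 3 + γ * (z n t) ^ 2
        + β * z n t + α
        + ∑ ℓ ∈ Finset.univ.erase n,
            2 * (zd n t + a + b * z n t + (z n t) ^ 2)
              * (zd ℓ t + a + b * z ℓ t + (z ℓ t) ^ 2) / (z n t - z ℓ t))
    (ψ : ℂ → ℝ → ℂ)
    (hψ : ∀ (w : ℂ) (t : ℝ), ψ w t = ∏ n : Fin N, (w - z n t))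
    (c₁ c₁d : ℝ → ℂ)
    (hc₁ : ∀ t : ℝ, c₁ t = -∑ n : Fin N, z n t)
    (hc₁d : ∀ t : ℝ, c₁d t = -∑ n : Fin N, zd n t) :
    ∀ (w : ℂ) (t : ℝ),
      deriv (deriv (ψ w)) t
        + (-2 * a + (-2 * b) * w + (-2) * w ^ 2)
            * deriv (fun w' => deriv (ψ w') t) w
        + ((-2 * c₁ t + 2 * ((N : ℂ) - 1) * b - γ) + (2 * (N : ℂ) - 1) * w)
            * deriv (ψ w) t
        + (a ^ 2 + (2 * a * b) * w + (2 * a + b ^ 2) * w ^ 2 + (2 * b) * w ^ 3 + w ^ 4)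
            * deriv (fun w' => deriv (fun w'' => ψ w'' t) w') w
        + ((2 * c₁ t - (2 * (N : ℂ) - 3) * b + γ) * a
            + (2 * b * c₁ t - (2 * (N : ℂ) - 3) * (a + b ^ 2) + b * γ) * w
            + (2 * c₁ t - 2 * (2 * (N : ℂ) - 3) * b + γ) * w ^ 2
            + (-(2 * (N : ℂ) - 3)) * w ^ 3)
            * deriv (fun w' => ψ w' t) w
        + ((-c₁d t + (c₁ t) ^ 2 - 2 * ((N : ℂ) - 1) * b * c₁ t + γ * c₁ t
              - (N : ℂ) * a + (N : ℂ) * ((N : ℂ) - 2) * b ^ 2 - (N : ℂ) * b * γ)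
            + (-(2 * (N : ℂ) - 1) * c₁ t + 2 * (N : ℂ) * ((N : ℂ) - 2) * b
              - (N : ℂ) * γ) * w
            + ((N : ℂ) * ((N : ℂ) - 2)) * w ^ 2)
            * ψ w t
      = 0 := by
  intro w t
  subst hα hβ
  have general := goldfish_stmt19_general a b γ z zd (zdd · t) t
    (.of_forall fun s n => hz n s) (hzd · t) (fun n m => not_imp_not.1 (hsep t n m))
    (hNewton · t) ψ hψ w _ _ rfl rfl
  rw [Fintype.card_fin] at general
  rw [hc₁, hc₁d]
  linear_combination general
end
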